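/- arXiv:math/9204212 — 3 statements merged into one kernel-verified Lean document; each statement's English description precedes it below -/
import Mathlib

section
/- Let K be a convex body in ℝⁿ with 0 in its interior, τ > 0, and 0 < δ < min(1, τⁿ)·vol(K). Then the convolution body K(δ,τ) = {x ∈ ℝⁿ : vol(K ∩ (x + τK)) ≥ δ} is a convex body (compact, convex, with nonempty interior); moreover, if K is centrally symmetric then so is K(δ,τ). -/
open MeasureTheory Set
open scoped Pointwise
open scoped ENNReal

/-- One-dimensional Brunn–Minkowski inequality for compact sets. -/
theorem volume_add_volume_le_of_isCompact {A B C : Set ℝ} (hA : IsCompact A) (hB : IsCompact B)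
    (hA0 : A.Nonempty) (hB0 : B.Nonempty) (hC : A + B ⊆ C) :
    volume A + volume B ≤ volume C := by
  obtain ⟨p, hp, hpA⟩ := hA.exists_isGreatest hA0
  obtain ⟨q, hq, hqB⟩ := hB.exists_isLeast hB0
  have hA' : volume ((fun x => x + q) '' A) = volume A := by simp
  have hB' : volume ((fun x => p + x) '' B) = volume B := by simp
  have hdisj : AEDisjoint volume ((fun x => x + q) '' A) ((fun x => p + x) '' B) := by
    refine measure_mono_null (t := {p + q}) ?_ (by simp)
    rintro _ ⟨⟨x, hx, rfl⟩, y, hy, hxy⟩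
    have := hpA hx
    have := hqB hy
    simp only [mem_singleton_iff] at hxy ⊢
    linarith
  rw [← hA', ← hB', ← measure_union₀ (hB.image (by fun_prop)).measurableSet.nullMeasurableSet hdisj]
  refine measure_mono ?_
  rintro _ (⟨x, hx, rfl⟩ | ⟨y, hy, rfl⟩)
  · exact hC (add_mem_add hx hq)
  · exact hC (add_mem_add hp hy)

/-- One-dimensional Brunn–Minkowski inequality for measurable sets. -/
theorem volume_add_volume_le {A B C : Set ℝ} (hA : MeasurableSet A) (hB : MeasurableSet B)
    (hA0 : A.Nonempty) (hB0 : B.Nonempty) (hC : A + B ⊆ C) :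
    volume A + volume B ≤ volume C := by
  obtain ⟨x, hx⟩ := hA0
  obtain ⟨y, hy⟩ := hB0
  rw [hA.measure_eq_iSup_isCompact, hB.measure_eq_iSup_isCompact]
  simp only [iSup_and']
  refine ENNReal.biSup_add_biSup_le' ⟨∅, by simp⟩ ⟨∅, by simp⟩ ?_
  rintro S ⟨hSA, hS⟩ T ⟨hTB, hT⟩
  refine (add_le_add (measure_mono (subset_insert x S)) (measure_mono (subset_insert y T))).trans ?_
  exact volume_add_volume_le_of_isCompact (hS.insert x) (hT.insert y) (insert_nonempty _ _)
    (insert_nonempty _ _)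
    ((add_subset_add (insert_subset hx hSA) (insert_subset hy hTB)).trans hC)

theorem ENNReal.geom_mean_le_arith_mean2_weighted {a b : ℝ} (ha : 0 < a) (hb : 0 < b)
    (hab : a + b = 1) (x y : ℝ≥0∞) :
    x ^ a * y ^ b ≤ ENNReal.ofReal a * x + ENNReal.ofReal b * y := by
  rcases eq_or_ne x ⊤ with rfl | hx
  · simp [ENNReal.mul_top, ha]
  rcases eq_or_ne y ⊤ with rfl | hy
  · simp [ENNReal.mul_top, hb]
  lift x to NNReal using hx
  lift y to NNReal using hy
  lift a to NNReal using ha.le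
  lift b to NNReal using hb.le
  rw [← ENNReal.coe_rpow_of_nonneg _ a.coe_nonneg, ← ENNReal.coe_rpow_of_nonneg _ b.coe_nonneg]
  simp only [ENNReal.ofReal_coe_nnreal]
  exact_mod_cast NNReal.geom_mean_le_arith_mean2_weighted a b x y (by exact_mod_cast hab)

/-- The measure `μ` satisfies the Prékopa–Leindler inequality with weights `a` and `b`. -/
def PrekopaLeindler (a b : ℝ) {E : Type*} [AddCommGroup E] [Module ℝ E] [MeasurableSpace E]
    (μ : Measure E) : Prop :=
  ∀ f g h : E → ℝ≥0∞, Measurable f → Measurable g → Measurable h →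
    (∀ x y, f x ^ a * g y ^ b ≤ h (a • x + b • y)) →
      (∫⁻ x, f x ∂μ) ^ a * (∫⁻ x, g x ∂μ) ^ b ≤ ∫⁻ x, h x ∂μ

theorem lintegral_eq_lintegral_Ioo_of_le_one {α : Type*} [MeasurableSpace α] (μ : Measure α)
    {f : α → ℝ≥0∞} (hf : Measurable f) (hf1 : ∀ x, f x ≤ 1) :
    ∫⁻ x, f x ∂μ = ∫⁻ t in Ioo (0 : ℝ) 1, μ {x | ENNReal.ofReal t < f x} := by
  have hfin : ∀ x, f x ≠ ⊤ := fun x => ((hf1 x).trans_lt ENNReal.one_lt_top).ne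
  have hlt : ∀ t : ℝ, 0 < t → {x | t < (f x).toReal} = {x | ENNReal.ofReal t < f x} := by
    intro t ht
    ext x
    exact (ENNReal.ofReal_lt_iff_lt_toReal ht.le (hfin x)).symm
  have key := lintegral_eq_lintegral_meas_lt μ (f := fun x => (f x).toReal)
    (Filter.Eventually.of_forall fun x => ENNReal.toReal_nonneg) hf.ennreal_toReal.aemeasurable
  simp only [ENNReal.ofReal_toReal (hfin _)] at key
  rw [key, setLIntegral_congr_fun measurableSet_Ioi (fun t ht => by rw [hlt t ht]),
    ← Ioo_union_Ici_eq_Ioi (zero_lt_one' ℝ),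
    lintegral_union measurableSet_Ici
      (disjoint_left.2 fun t h1 h2 => absurd h1.2 (not_lt.2 h2))]
  have : ∫⁻ t in Ici (1 : ℝ), μ {x | ENNReal.ofReal t < f x} = 0 := by
    rw [setLIntegral_congr_fun (g := fun _ => 0) measurableSet_Ici, lintegral_zero]
    intro t ht
    have : {x | ENNReal.ofReal t < f x} = ∅ := by
      ext x
      simpa using (hf1 x).trans (ENNReal.one_le_ofReal.2 ht)
    simp [this]
  rw [this, add_zero]

theorem weighted_lintegral_le_of_iSup_eq_one {a b : ℝ} (ha : 0 < a) (hb : 0 < b)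
    (hab : a + b = 1) {f g h : ℝ → ℝ≥0∞}
    (hf : Measurable f) (hg : Measurable g) (hh : Measurable h)
    (hf1 : ⨆ x, f x = 1) (hg1 : ⨆ x, g x = 1)
    (hfgh : ∀ x y, f x ^ a * g y ^ b ≤ h (a • x + b • y)) :
    ENNReal.ofReal a * (∫⁻ x, f x) + ENNReal.ofReal b * ∫⁻ x, g x ≤ ∫⁻ x, h x := by
  have hfle : ∀ x, f x ≤ 1 := fun x => hf1 ▸ le_iSup f x
  have hgle : ∀ x, g x ≤ 1 := fun x => hg1 ▸ le_iSup g x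
  have hanti : ∀ u : ℝ → ℝ≥0∞, Measurable fun t : ℝ => volume {x | ENNReal.ofReal t < u x} := by
    intro u
    refine Antitone.measurable fun s t hst => measure_mono fun x hx => ?_
    exact (ENNReal.ofReal_le_ofReal hst).trans_lt hx
  calc ENNReal.ofReal a * (∫⁻ x, f x) + ENNReal.ofReal b * ∫⁻ x, g x
      = ∫⁻ t in Ioo (0 : ℝ) 1, (ENNReal.ofReal a * volume {x | ENNReal.ofReal t < f x} +
          ENNReal.ofReal b * volume {x | ENNReal.ofReal t < g x}) := by
        rw [lintegral_eq_lintegral_Ioo_of_le_one _ hf hfle,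
          lintegral_eq_lintegral_Ioo_of_le_one _ hg hgle,
          lintegral_add_left ((hanti f).const_mul _), lintegral_const_mul _ (hanti f),
          lintegral_const_mul _ (hanti g)]
    _ ≤ ∫⁻ t in Ioo (0 : ℝ) 1, volume {x | ENNReal.ofReal t < min (h x) 1} := by
        refine setLIntegral_mono (hanti _) fun t ht => ?_
        have ht1 : ENNReal.ofReal t < 1 := by
          rw [ENNReal.ofReal_lt_one]; exact ht.2
        have ht0 : ENNReal.ofReal t ≠ 0 := by simpa using ht.1
        have hA := Measure.addHaar_smul (volume : Measure ℝ) a {x | ENNReal.ofReal t < f x}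
        have hB := Measure.addHaar_smul (volume : Measure ℝ) b {x | ENNReal.ofReal t < g x}
        simp only [Module.finrank_self, pow_one, abs_of_pos ha, abs_of_pos hb] at hA hB
        rw [← hA, ← hB]
        refine volume_add_volume_le
          ((measurableSet_lt measurable_const hf).const_smul₀ a)
          ((measurableSet_lt measurable_const hg).const_smul₀ b) ?_ ?_ ?_
        · obtain ⟨x, hx⟩ := lt_iSup_iff.1 (hf1.symm ▸ ht1)
          exact Set.Nonempty.smul_set ⟨x, hx⟩
        · obtain ⟨x, hx⟩ := lt_iSup_iff.1 (hg1.symm ▸ ht1)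
          exact Set.Nonempty.smul_set ⟨x, hx⟩
        · rintro _ ⟨_, ⟨x, hx, rfl⟩, _, ⟨y, hy, rfl⟩, rfl⟩
          refine lt_min (lt_of_lt_of_le ?_ (hfgh x y)) ht1
          calc ENNReal.ofReal t = ENNReal.ofReal t ^ a * ENNReal.ofReal t ^ b := by
                rw [← ENNReal.rpow_add _ _ ht0 ENNReal.ofReal_ne_top, hab, ENNReal.rpow_one]
            _ < f x ^ a * g y ^ b :=
                ENNReal.mul_lt_mul (ENNReal.rpow_lt_rpow hx ha) (ENNReal.rpow_lt_rpow hy hb)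
    _ = ∫⁻ x, min (h x) 1 :=
        (lintegral_eq_lintegral_Ioo_of_le_one _ (hh.min measurable_const)
          fun x => min_le_right _ _).symm
    _ ≤ ∫⁻ x, h x := lintegral_mono fun x => min_le_left _ _

theorem lintegral_rpow_mul_le_of_iSup_ne_top {a b : ℝ} (ha : 0 < a) (hb : 0 < b)
    (hab : a + b = 1) {f g h : ℝ → ℝ≥0∞}
    (hf : Measurable f) (hg : Measurable g) (hh : Measurable h)
    (hft : ⨆ x, f x ≠ ⊤) (hgt : ⨆ x, g x ≠ ⊤)
    (hfgh : ∀ x y, f x ^ a * g y ^ b ≤ h (a • x + b • y)) :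
    (∫⁻ x, f x) ^ a * (∫⁻ x, g x) ^ b ≤ ∫⁻ x, h x := by
  rcases eq_or_ne (⨆ x, f x) 0 with hf0 | hf0
  · simp [ENNReal.iSup_eq_zero.1 hf0, ha]
  rcases eq_or_ne (⨆ x, g x) 0 with hg0 | hg0
  · simp [ENNReal.iSup_eq_zero.1 hg0, hb]
  set F := ⨆ x, f x
  set G := ⨆ x, g x
  have hmul : ∀ u v : ℝ≥0∞, (F⁻¹ * u) ^ a * (G⁻¹ * v) ^ b =
      (F⁻¹ ^ a * G⁻¹ ^ b) * (u ^ a * v ^ b) := by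
    intro u v
    rw [ENNReal.mul_rpow_of_nonneg _ _ ha.le, ENNReal.mul_rpow_of_nonneg _ _ hb.le]
    ring
  have key := (ENNReal.geom_mean_le_arith_mean2_weighted ha hb hab _ _).trans
    (weighted_lintegral_le_of_iSup_eq_one ha hb hab (f := fun x => F⁻¹ * f x)
      (g := fun x => G⁻¹ * g x) (h := fun x => (F⁻¹ ^ a * G⁻¹ ^ b) * h x)
      (hf.const_mul _) (hg.const_mul _) (hh.const_mul _)
      (by rw [← ENNReal.mul_iSup, ENNReal.inv_mul_cancel hf0 hft])
      (by rw [← ENNReal.mul_iSup, ENNReal.inv_mul_cancel hg0 hgt])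
      (fun x y => by rw [hmul]; gcongr; exact hfgh x y))
  rw [lintegral_const_mul _ hf, lintegral_const_mul _ hg, lintegral_const_mul _ hh, hmul] at key
  have hF : F⁻¹ ^ a ≠ 0 := by simp [ENNReal.rpow_eq_zero_iff, hft, hf0]
  have hG : G⁻¹ ^ b ≠ 0 := by simp [ENNReal.rpow_eq_zero_iff, hgt, hg0]
  have hF' : F⁻¹ ^ a ≠ ⊤ := ENNReal.rpow_ne_top_of_nonneg ha.le (by simpa using hf0)
  have hG' : G⁻¹ ^ b ≠ ⊤ := ENNReal.rpow_ne_top_of_nonneg hb.le (by simpa using hg0)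
  exact (ENNReal.mul_le_mul_iff_right (mul_ne_zero hF hG) (ENNReal.mul_ne_top hF' hG')).1 key

theorem lintegral_eq_iSup_lintegral_min {α : Type*} [MeasurableSpace α] (μ : Measure α)
    {f : α → ℝ≥0∞} (hf : Measurable f) :
    ∫⁻ x, f x ∂μ = ⨆ n : ℕ, ∫⁻ x, min (f x) n ∂μ := by
  rw [← lintegral_iSup (fun n => hf.min measurable_const)
    (fun m n hmn x => min_le_min_left _ (by exact_mod_cast hmn))]
  congr with x
  rw [← inf_iSup_eq, ENNReal.iSup_natCast, inf_top_eq]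

/-- The one-dimensional Prékopa–Leindler inequality. -/
theorem prekopaLeindler_real {a b : ℝ} (ha : 0 < a) (hb : 0 < b) (hab : a + b = 1) :
    PrekopaLeindler a b (volume : Measure ℝ) := by
  intro f g h hf hg hh hfgh
  rw [lintegral_eq_iSup_lintegral_min _ hf, lintegral_eq_iSup_lintegral_min _ hg,
    ← ENNReal.orderIsoRpow_apply a ha, ← ENNReal.orderIsoRpow_apply b hb, OrderIso.map_iSup,
    OrderIso.map_iSup, ENNReal.iSup_mul]
  refine iSup_le fun m => ?_
  rw [ENNReal.mul_iSup]
  refine iSup_le fun n => ?_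
  refine lintegral_rpow_mul_le_of_iSup_ne_top ha hb hab (hf.min measurable_const)
    (hg.min measurable_const) hh ?_ ?_ fun x y => le_trans ?_ (hfgh x y)
  · exact ((iSup_le fun x => min_le_right _ _).trans_lt (ENNReal.natCast_lt_top m)).ne
  · exact ((iSup_le fun x => min_le_right _ _).trans_lt (ENNReal.natCast_lt_top n)).ne
  · gcongr <;> exact min_le_left _ _

theorem PrekopaLeindler.prod {a b : ℝ} {E F : Type*} [AddCommGroup E] [Module ℝ E]
    [MeasurableSpace E] [AddCommGroup F] [Module ℝ F] [MeasurableSpace F]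
    {μ : Measure E} {ν : Measure F} [SFinite ν]
    (hμ : PrekopaLeindler a b μ) (hν : PrekopaLeindler a b ν) :
    PrekopaLeindler a b (μ.prod ν) := by
  intro f g h hf hg hh hfgh
  rw [lintegral_prod _ hf.aemeasurable, lintegral_prod _ hg.aemeasurable,
    lintegral_prod _ hh.aemeasurable]
  refine hμ _ _ _ hf.lintegral_prod_right' hg.lintegral_prod_right' hh.lintegral_prod_right' ?_
  intro x y
  exact hν _ _ _ (hf.comp measurable_prodMk_left) (hg.comp measurable_prodMk_left)
    (hh.comp measurable_prodMk_left) fun z w => hfgh (x, z) (y, w)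

theorem PrekopaLeindler.of_measurePreserving {a b : ℝ} {E F : Type*} [AddCommGroup E] [Module ℝ E]
    [MeasurableSpace E] [AddCommGroup F] [Module ℝ F] [MeasurableSpace F]
    {μ : Measure E} {ν : Measure F} (hμ : PrekopaLeindler a b μ) (e : E →ₗ[ℝ] F)
    (he : MeasurePreserving e μ ν) : PrekopaLeindler a b ν := by
  intro f g h hf hg hh hfgh
  rw [← he.lintegral_comp hf, ← he.lintegral_comp hg, ← he.lintegral_comp hh]
  refine hμ _ _ _ (hf.comp he.measurable) (hg.comp he.measurable) (hh.comp he.measurable) ?_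
  intro x y
  simpa using hfgh (e x) (e y)

theorem prekopaLeindler_pi {a b : ℝ} (ha : 0 < a) (hb : 0 < b) (hab : a + b = 1) (n : ℕ) :
    PrekopaLeindler a b (volume : Measure (Fin n → ℝ)) := by
  induction n with
  | zero =>
    intro f g h _ _ _ hfgh
    have hv : (volume : Measure (Fin 0 → ℝ)) = Measure.dirac 0 := by
      rw [volume_pi, Measure.pi_of_empty _ 0]
    simpa [hv] using hfgh 0 0
  | succ n ih =>
    have hcons : ⇑(Fin.consLinearEquiv ℝ fun _ : Fin (n + 1) => ℝ).toLinearMap =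
        (MeasurableEquiv.piFinSuccAbove (fun _ : Fin (n + 1) => ℝ) 0).symm := by
      ext p i
      simp [MeasurableEquiv.piFinSuccAbove, Fin.consLinearEquiv]
    refine ((prekopaLeindler_real ha hb hab).prod ih).of_measurePreserving
      (Fin.consLinearEquiv ℝ fun _ : Fin (n + 1) => ℝ).toLinearMap ?_
    rw [hcons]
    exact (volume_preserving_piFinSuccAbove (fun _ : Fin (n + 1) => ℝ) 0).symm

/-- The Prékopa–Leindler inequality on Euclidean space. -/
theorem prekopaLeindler_euclideanSpace {a b : ℝ} (ha : 0 < a) (hb : 0 < b) (hab : a + b = 1)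
    (n : ℕ) : PrekopaLeindler a b (volume : Measure (EuclideanSpace ℝ (Fin n))) :=
  (prekopaLeindler_pi ha hb hab n).of_measurePreserving
    (WithLp.linearEquiv 2 ℝ (Fin n → ℝ)).symm.toLinearMap (PiLp.volume_preserving_toLp (Fin n))

/-- The multiplicative Brunn–Minkowski inequality. -/
theorem volume_rpow_mul_volume_rpow_le {a b : ℝ} (ha : 0 < a) (hb : 0 < b) (hab : a + b = 1)
    {n : ℕ} {A B C : Set (EuclideanSpace ℝ (Fin n))} (hA : MeasurableSet A) (hB : MeasurableSet B)
    (hC : MeasurableSet C) (hABC : a • A + b • B ⊆ C) :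
    volume A ^ a * volume B ^ b ≤ volume C := by
  have key := prekopaLeindler_euclideanSpace ha hb hab n (A.indicator 1) (B.indicator 1)
    (C.indicator 1) (measurable_one.indicator hA) (measurable_one.indicator hB)
    (measurable_one.indicator hC) fun x y => ?_
  · simpa [lintegral_indicator_one, hA, hB, hC] using key
  · by_cases hx : x ∈ A
    · by_cases hy : y ∈ B
      · have := hABC (add_mem_add (smul_mem_smul_set hx) (smul_mem_smul_set hy))
        simp [hx, hy, this]
      · simp [hy, hb]
    · simp [hx, ha]

theorem isClosed_le_volume_inter_image {E : Type*} [NormedAddCommGroup E] [NormedSpace ℝ E]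
    [MeasurableSpace E] [BorelSpace E] (μ : Measure E) [μ.OuterRegular] {K : Set E}
    (hK : IsCompact K) (τ : ℝ) (δ : ENNReal) :
    IsClosed {x : E | δ ≤ μ (K ∩ (fun z => x + τ • z) '' K)} := by
  rw [← isOpen_compl_iff, isOpen_iff_mem_nhds]
  intro x hx
  simp only [mem_compl_iff, mem_ofPred_eq, not_le] at hx
  obtain ⟨U, hKU, hU, hUδ⟩ := exists_isOpen_lt_of_lt _ _ hx
  have hcomp : IsCompact (K \ U + (-τ) • K) := (hK.diff hU).add (hK.smul _)
  have hx' : x ∉ K \ U + (-τ) • K := by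
    rintro ⟨z, ⟨hz, hzU⟩, _, ⟨w, hw, rfl⟩, rfl⟩
    exact hzU (hKU ⟨hz, w, hw, by simp⟩)
  filter_upwards [hcomp.isClosed.isOpen_compl.mem_nhds hx'] with y hy
  simp only [mem_compl_iff, mem_ofPred_eq, not_le]
  refine (measure_mono ?_).trans_lt hUδ
  rintro _ ⟨hz, w, hw, rfl⟩
  by_contra hzU
  exact hy ⟨_, ⟨hz, hzU⟩, _, ⟨w, hw, rfl⟩, by simp⟩

theorem image_add_smul_subset_inter_image {E : Type*} [AddCommGroup E] [Module ℝ E] {K : Set E}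
    (hK : Convex ℝ K) (h0 : 0 ∈ K) {τ r : ℝ} (hτ : 0 < τ) (hr0 : 0 ≤ r) (hr1 : r ≤ 1) {x : E}
    (hx : x ∈ (1 - r) • K) :
    (fun z => x + z) '' ((r * min 1 τ) • K) ⊆ K ∩ (fun z => x + τ • z) '' K := by
  rintro _ ⟨_, ⟨z, hz, rfl⟩, rfl⟩
  obtain ⟨y, hy, rfl⟩ := hx
  have hs : 0 < min 1 τ := lt_min one_pos hτ
  refine ⟨?_, (r * min 1 τ / τ) • z, hK.smul_mem_of_zero_mem h0 hz ⟨by positivity, ?_⟩, ?_⟩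
  · have := hK hy (hK.smul_mem_of_zero_mem h0 hz ⟨hs.le, min_le_left 1 τ⟩) (sub_nonneg.2 hr1) hr0
      (by ring)
    simpa [mul_smul] using this
  · rw [div_le_one hτ]
    exact (mul_le_of_le_one_left hs.le hr1).trans (min_le_right _ _)
  · simp only [smul_smul, mul_div_cancel₀ _ hτ.ne']

theorem min_one_pow {τ : ℝ} (hτ : 0 < τ) (n : ℕ) : min 1 τ ^ n = min 1 (τ ^ n) := by
  rcases le_total 1 τ with h | h
  · rw [min_eq_left h, min_eq_left (one_le_pow₀ h), one_pow]
  · rw [min_eq_right h, min_eq_right (pow_le_one₀ hτ.le h)]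

theorem interior_le_volume_inter_image_nonempty {n : ℕ} {K : Set (EuclideanSpace ℝ (Fin n))}
    (hKcomp : IsCompact K) (hKconv : Convex ℝ K) (h0 : 0 ∈ interior K) {τ : ℝ} (hτ : 0 < τ)
    {δ : ENNReal} (hδ : δ < ENNReal.ofReal (min 1 (τ ^ n)) * volume K) :
    (interior {x : EuclideanSpace ℝ (Fin n) |
      δ ≤ volume (K ∩ (fun z => x + τ • z) '' K)}).Nonempty := by
  have hcont : Continuous fun r : ℝ => ENNReal.ofReal ((r * min 1 τ) ^ n) * volume K :=
    ENNReal.continuous_mul_const hKcomp.measure_lt_top.ne |>.comp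
      (ENNReal.continuous_ofReal.comp (by fun_prop))
  have hlim : ∀ᶠ r in nhdsWithin (1 : ℝ) (Iio 1),
      δ < ENNReal.ofReal ((r * min 1 τ) ^ n) * volume K := by
    refine nhdsWithin_le_nhds (hcont.continuousAt.eventually_const_lt ?_)
    beta_reduce
    rwa [one_mul, min_one_pow hτ]
  obtain ⟨r, hr, hr0, hr1⟩ := (hlim.and (Ioo_mem_nhdsLT (zero_lt_one' ℝ))).exists
  have hpos : 0 < r * min 1 τ := mul_pos hr0 (lt_min one_pos hτ)
  refine ⟨0, interior_maximal (t := (1 - r) • interior K) ?_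
    (isOpen_interior.smul₀ (sub_pos.2 hr1).ne') ⟨0, h0, smul_zero _⟩⟩
  intro x hx
  have hsub := image_add_smul_subset_inter_image hKconv (interior_subset h0) hτ hr0.le hr1.le
    (smul_set_mono interior_subset hx)
  refine hr.le.trans (le_trans (le_of_eq ?_) (measure_mono hsub))
  rw [image_add_left, measure_preimage_add, Measure.addHaar_smul, finrank_euclideanSpace_fin,
    abs_of_pos (pow_pos hpos n)]

theorem isCompact_le_volume_inter_image {n : ℕ} {K : Set (EuclideanSpace ℝ (Fin n))}
    (hKcomp : IsCompact K) (τ : ℝ) {δ : ENNReal} (hδ0 : 0 < δ) :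
    IsCompact {x : EuclideanSpace ℝ (Fin n) | δ ≤ volume (K ∩ (fun z => x + τ • z) '' K)} := by
  refine (hKcomp.add (hKcomp.smul (-τ))).of_isClosed_subset
    (isClosed_le_volume_inter_image volume hKcomp τ δ) fun x hx => ?_
  obtain ⟨_, hz, w, hw, rfl⟩ := nonempty_of_measure_ne_zero (hδ0.trans_le hx).ne'
  exact ⟨_, hz, _, ⟨w, hw, rfl⟩, by simp⟩

theorem convex_le_volume_inter_image {n : ℕ} {K : Set (EuclideanSpace ℝ (Fin n))}
    (hKcomp : IsCompact K) (hKconv : Convex ℝ K) (τ : ℝ) (δ : ENNReal) (hδ0 : 0 < δ) :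
    Convex ℝ {x : EuclideanSpace ℝ (Fin n) | δ ≤ volume (K ∩ (fun z => x + τ • z) '' K)} := by
  have hmeas : ∀ x : EuclideanSpace ℝ (Fin n),
      MeasurableSet (K ∩ (fun z => x + τ • z) '' K) := fun x =>
    hKcomp.measurableSet.inter (hKcomp.image (by fun_prop)).measurableSet
  rw [convex_iff_forall_pos]
  intro x hx y hy a b ha hb hab
  have hδt : δ ≠ ⊤ :=
    ((le_trans hx (measure_mono inter_subset_left)).trans_lt hKcomp.measure_lt_top).ne
  refine le_trans ?_ (volume_rpow_mul_volume_rpow_le ha hb hab (hmeas x) (hmeas y) (hmeas _) ?_)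
  · calc δ = δ ^ a * δ ^ b := by rw [← ENNReal.rpow_add _ _ hδ0.ne' hδt, hab, ENNReal.rpow_one]
      _ ≤ _ := by
        gcongr
        · exact hx
        · exact hy
  · rintro _ ⟨_, ⟨_, ⟨hp, z, hz, rfl⟩, rfl⟩, _, ⟨_, ⟨hq, w, hw, rfl⟩, rfl⟩, rfl⟩
    refine ⟨hKconv hp hq ha.le hb.le hab, a • z + b • w, hKconv hz hw ha.le hb.le hab, ?_⟩
    simp only
    module

theorem volume_inter_image_neg {n : ℕ} {K : Set (EuclideanSpace ℝ (Fin n))} (hK : K = -K)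
    (τ : ℝ) (x : EuclideanSpace ℝ (Fin n)) :
    volume (K ∩ (fun z => -x + τ • z) '' K) = volume (K ∩ (fun z => x + τ • z) '' K) := by
  have hneg : ∀ z, z ∈ K → -z ∈ K := fun z hz => by rw [hK] at hz; exact hz
  rw [← Measure.measure_neg volume (K ∩ (fun z => x + τ • z) '' K)]
  congr 1
  ext y
  constructor
  · rintro ⟨hy, z, hz, rfl⟩
    exact ⟨hneg _ hy, -z, hneg z hz, by simp only; module⟩
  · rintro ⟨hy, z, hz, hzy⟩
    refine ⟨neg_neg y ▸ hneg _ hy, -z, hneg z hz, ?_⟩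
    rw [← neg_neg y, ← hzy]
    module

/-- The convolution body `K(δ,τ) = {x : vol (K ∩ (x + τK)) ≥ δ}` is a convex body,
and it is symmetric whenever `K` is. -/
theorem stmt_1 (n : ℕ) (K : Set (EuclideanSpace ℝ (Fin n)))
    (hKcomp : IsCompact K) (hKconv : Convex ℝ K) (hKint : (interior K).Nonempty)
    (h0 : 0 ∈ interior K)
    (τ : ℝ) (hτ : 0 < τ)
    (δ : ENNReal) (hδ0 : 0 < δ)
    (hδ : δ < ENNReal.ofReal (min 1 (τ ^ n)) * volume K) :
    IsCompact {x : EuclideanSpace ℝ (Fin n) | δ ≤ volume (K ∩ (fun z => x + τ • z) '' K)} ∧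
    Convex ℝ {x : EuclideanSpace ℝ (Fin n) | δ ≤ volume (K ∩ (fun z => x + τ • z) '' K)} ∧
    (interior {x : EuclideanSpace ℝ (Fin n) |
        δ ≤ volume (K ∩ (fun z => x + τ • z) '' K)}).Nonempty ∧
    (K = -K → {x : EuclideanSpace ℝ (Fin n) | δ ≤ volume (K ∩ (fun z => x + τ • z) '' K)} =
      -{x : EuclideanSpace ℝ (Fin n) | δ ≤ volume (K ∩ (fun z => x + τ • z) '' K)}) := by
  refine ⟨isCompact_le_volume_inter_image hKcomp τ hδ0,
    convex_le_volume_inter_image hKcomp hKconv τ δ hδ0,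
    interior_le_volume_inter_image_nonempty hKcomp hKconv h0 hτ hδ, fun hsymm => ?_⟩
  ext x
  rw [Set.mem_neg, mem_ofPred_eq, mem_ofPred_eq, volume_inter_image_neg hsymm]
end

section
/- Let K be a symmetric convex body in ℝⁿ and 0 < δ < vol(K). Then the convolution body K(δ) = {x ∈ ℝⁿ : vol(K ∩ (x + K)) ≥ δ} is strictly convex: its boundary contains no line segment. -/
open MeasureTheory Set
open scoped Pointwise

theorem volume_add_le_of_isCompact {A B C : Set ℝ} (hA : IsCompact A) (hB : IsCompact B)
    (hA0 : A.Nonempty) (hB0 : B.Nonempty) (h : ∀ x ∈ A, ∀ y ∈ B, x + y ∈ C) :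
    volume A + volume B ≤ volume C := by
  obtain ⟨k, hkA, hk⟩ := hA.exists_isGreatest hA0
  obtain ⟨l, hlB, hl⟩ := hB.exists_isLeast hB0
  have hdisj : AEDisjoint volume (l +ᵥ A) (k +ᵥ B) := by
    refine measure_mono_null (t := {k + l}) ?_ (by simp)
    rintro _ ⟨⟨x, hx, rfl⟩, ⟨y, hy, hxy⟩⟩
    have := hk hx
    have := hl hy
    simp only [vadd_eq_add, mem_singleton_iff] at hxy ⊢
    linarith
  calc volume A + volume B = volume (l +ᵥ A) + volume (k +ᵥ B) := by
        simp only [measure_vadd]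
    _ = volume ((l +ᵥ A) ∪ (k +ᵥ B)) :=
        (measure_union₀ (hB.vadd k).measurableSet.nullMeasurableSet hdisj).symm
    _ ≤ volume C := by
        refine measure_mono (union_subset ?_ ?_)
        · rintro _ ⟨x, hx, rfl⟩
          simpa [add_comm] using h x hx l hlB
        · rintro _ ⟨y, hy, rfl⟩
          exact h k hkA y hy

/-- The one-dimensional Brunn–Minkowski inequality. -/
theorem volume_add_le_of_add_mem {A B C : Set ℝ} (hA : MeasurableSet A) (hB : MeasurableSet B)
    (hA0 : A.Nonempty) (hB0 : B.Nonempty) (h : ∀ x ∈ A, ∀ y ∈ B, x + y ∈ C) :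
    volume A + volume B ≤ volume C := by
  obtain ⟨x₀, hx₀⟩ := hA0
  obtain ⟨y₀, hy₀⟩ := hB0
  rw [hA.measure_eq_iSup_isCompact, hB.measure_eq_iSup_isCompact]
  simp_rw [iSup_and']
  refine ENNReal.biSup_add_biSup_le' ⟨∅, by simp⟩ ⟨∅, by simp⟩ fun K hK L hL => ?_
  refine (add_le_add (measure_mono (subset_insert x₀ K))
    (measure_mono (subset_insert y₀ L))).trans ?_
  exact volume_add_le_of_isCompact (hK.2.insert x₀) (hL.2.insert y₀) (insert_nonempty _ _)
    (insert_nonempty _ _) fun x hx y hy =>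
      h x (insert_subset hx₀ hK.1 hx) y (insert_subset hy₀ hL.1 hy)

theorem volume_smul_add_le_of_mem {a b : ℝ} (ha : 0 < a) (hb : 0 < b) {A B C : Set ℝ}
    (hA : MeasurableSet A) (hB : MeasurableSet B)
    (hA0 : A.Nonempty) (hB0 : B.Nonempty) (h : ∀ x ∈ A, ∀ y ∈ B, a * x + b * y ∈ C) :
    ENNReal.ofReal a * volume A + ENNReal.ofReal b * volume B ≤ volume C := by
  have key := volume_add_le_of_add_mem (C := C) (hA.const_smul₀ a) (hB.const_smul₀ b)
    hA0.smul_set hB0.smul_set (by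
      rintro _ ⟨x, hx, rfl⟩ _ ⟨y, hy, rfl⟩
      exact h x hx y hy)
  simpa [Measure.addHaar_smul, abs_of_pos ha, abs_of_pos hb] using key

theorem lintegral_add_le_of_superlevel {a b : ℝ} (ha : 0 < a) (hb : 0 < b) {f g h : ℝ → ℝ}
    (hf : Measurable f) (hg : Measurable g) (hh : Measurable h)
    (hf0 : 0 ≤ f) (hg0 : 0 ≤ g) (hh0 : 0 ≤ h) (hf1 : ∀ x, f x ≤ 1) (hg1 : ∀ x, g x ≤ 1)
    (hfs : ∀ c < 1, ∃ x, c < f x) (hgs : ∀ c < 1, ∃ x, c < g x)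
    (H : ∀ c, 0 < c → ∀ x y, c < f x → c < g y → c < h (a * x + b * y)) :
    ENNReal.ofReal a * (∫⁻ x, ENNReal.ofReal (f x))
        + ENNReal.ofReal b * (∫⁻ x, ENNReal.ofReal (g x))
      ≤ ∫⁻ x, ENNReal.ofReal (h x) := by
  rw [lintegral_eq_lintegral_meas_lt _ (.of_forall hf0) hf.aemeasurable,
    lintegral_eq_lintegral_meas_lt _ (.of_forall hg0) hg.aemeasurable,
    lintegral_eq_lintegral_meas_lt _ (.of_forall hh0) hh.aemeasurable,
    ← lintegral_const_mul' _ _ (by simp), ← lintegral_const_mul' _ _ (by simp),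
    ← lintegral_add_left']
  · refine setLIntegral_mono' measurableSet_Ioi fun c hc => ?_
    rcases lt_or_ge c 1 with hc1 | hc1
    · exact volume_smul_add_le_of_mem ha hb (measurableSet_lt measurable_const hf)
        (measurableSet_lt measurable_const hg) (hfs c hc1) (hgs c hc1)
        fun x hx y hy => H c hc x y hx hy
    · have h1 : {x | c < f x} = ∅ := by
        ext x; simpa using (hf1 x).trans hc1
      have h2 : {x | c < g x} = ∅ := by
        ext x; simpa using (hg1 x).trans hc1
      simp [h1, h2]
  · refine (Antitone.measurable ?_).aemeasurable
    intro c d hcd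
    simp only
    gcongr

theorem ennreal_geom_le_arith {a b : ℝ} (ha : 0 < a) (hb : 0 < b) (hab : a + b = 1)
    (u v : ENNReal) : u ^ a * v ^ b ≤ ENNReal.ofReal a * u + ENNReal.ofReal b * v := by
  have h1 : (1 / a).HolderConjugate (1 / b) :=
    Real.holderConjugate_iff.2 ⟨by rw [lt_div_iff₀ ha]; linarith, by simpa using hab⟩
  have := ENNReal.young_inequality (u ^ a) (v ^ b) h1
  simpa [← ENNReal.rpow_mul, ha.ne', hb.ne', div_eq_mul_inv, mul_comm,
    ENNReal.ofReal_inv_of_pos, ha, hb] using this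

theorem prekopa_leindler_real_of_le {a b : ℝ} (ha : 0 < a) (hb : 0 < b) (hab : a + b = 1)
    {f g h : ℝ → ENNReal} (hf : Measurable f) (hg : Measurable g) (hh : Measurable h)
    {N : ENNReal} (hN : N ≠ ⊤) (hfN : ∀ x, f x ≤ N) (hgN : ∀ x, g x ≤ N)
    (H : ∀ x y, f x ^ a * g y ^ b ≤ h (a * x + b * y)) :
    (∫⁻ x, f x) ^ a * (∫⁻ x, g x) ^ b ≤ ∫⁻ x, h x := by
  set F := ⨆ x, f x with hF
  set G := ⨆ x, g x with hG
  have hFt : F ≠ ⊤ := ne_top_of_le_ne_top hN (iSup_le hfN)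
  have hGt : G ≠ ⊤ := ne_top_of_le_ne_top hN (iSup_le hgN)
  have hfF : ∀ x, f x ≤ F := le_iSup f
  have hgG : ∀ x, g x ≤ G := le_iSup g
  rcases eq_or_ne F 0 with hF0 | hF0
  · have : ∀ x, f x = 0 := fun x => le_antisymm ((hfF x).trans hF0.le) zero_le
    simp [this, ha]
  rcases eq_or_ne G 0 with hG0 | hG0
  · have : ∀ x, g x = 0 := fun x => le_antisymm ((hgG x).trans hG0.le) zero_le
    simp [this, hb]
  set M := F ^ a * G ^ b with hM
  have hMt : M ≠ ⊤ := ENNReal.mul_ne_top (ENNReal.rpow_ne_top_of_nonneg ha.le hFt)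
    (ENNReal.rpow_ne_top_of_nonneg hb.le hGt)
  have hM0 : M ≠ 0 := by
    simp [hM, ENNReal.rpow_eq_zero_iff, hF0, hG0, hFt, hGt]
  have normalize : ∀ {u : ℝ → ENNReal} {U : ENNReal}, U ≠ 0 → U ≠ ⊤ → U = ⨆ x, u x →
      ∀ c < (1 : ℝ), ∃ x, c < (u x / U).toReal := by
    intro u U hU0 hUt hU c hc
    have hlt : ENNReal.ofReal c * U < U := by
      calc ENNReal.ofReal c * U < 1 * U := by
            refine (ENNReal.mul_lt_mul_iff_left hU0 hUt).2 ?_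
            simpa using hc
        _ = U := one_mul U
    obtain ⟨x, hx⟩ := lt_iSup_iff.1 (hlt.trans_eq hU)
    refine ⟨x, ?_⟩
    rcases lt_or_ge c 0 with hc0 | hc0
    · exact hc0.trans_le ENNReal.toReal_nonneg
    · exact (ENNReal.ofReal_lt_iff_lt_toReal hc0 (ENNReal.div_ne_top
        (ne_top_of_le_ne_top hUt (hU ▸ le_iSup u x)) hU0)).1
        ((ENNReal.lt_div_iff_mul_lt (.inl hU0) (.inl hUt)).2 hx)
  have hf1 : ∀ x, f x / F ≤ 1 := fun x => ENNReal.div_le_of_le_mul (by simpa using hfF x)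
  have hg1 : ∀ x, g x / G ≤ 1 := fun x => ENNReal.div_le_of_le_mul (by simpa using hgG x)
  have hft : ∀ x, f x / F ≠ ⊤ := fun x => ne_top_of_le_ne_top ENNReal.one_ne_top (hf1 x)
  have hgt : ∀ x, g x / G ≠ ⊤ := fun x => ne_top_of_le_ne_top ENNReal.one_ne_top (hg1 x)
  have hht : ∀ x, min (h x / M) 1 ≠ ⊤ := fun x =>
    ne_top_of_le_ne_top ENNReal.one_ne_top (min_le_right _ _)
  have key := lintegral_add_le_of_superlevel ha hb
    (f := fun x => (f x / F).toReal) (g := fun x => (g x / G).toReal)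
    (h := fun x => (min (h x / M) 1).toReal)
    (hf.div_const F).ennreal_toReal (hg.div_const G).ennreal_toReal
    ((hh.div_const M).min measurable_const).ennreal_toReal
    (fun _ => ENNReal.toReal_nonneg) (fun _ => ENNReal.toReal_nonneg)
    (fun _ => ENNReal.toReal_nonneg)
    (fun x => ENNReal.toReal_le_of_le_ofReal zero_le_one (by simpa using hf1 x))
    (fun x => ENNReal.toReal_le_of_le_ofReal zero_le_one (by simpa using hg1 x))
    (normalize hF0 hFt hF) (normalize hG0 hGt hG) (by
      intro c hc x y hx hy
      rw [← ENNReal.ofReal_lt_iff_lt_toReal hc.le (hft x)] at hx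
      rw [← ENNReal.ofReal_lt_iff_lt_toReal hc.le (hgt y)] at hy
      rw [← ENNReal.ofReal_lt_iff_lt_toReal hc.le (hht _)]
      refine lt_min ?_ (hx.trans_le (hf1 x))
      calc ENNReal.ofReal c = ENNReal.ofReal c ^ a * ENNReal.ofReal c ^ b := by
            rw [← ENNReal.rpow_add_of_nonneg _ _ ha.le hb.le, hab, ENNReal.rpow_one]
        _ < (f x / F) ^ a * (g y / G) ^ b :=
            ENNReal.mul_lt_mul (ENNReal.rpow_lt_rpow hx ha) (ENNReal.rpow_lt_rpow hy hb)
        _ = f x ^ a * g y ^ b / M := by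
            rw [ENNReal.div_rpow_of_nonneg _ _ ha.le, ENNReal.div_rpow_of_nonneg _ _ hb.le,
              ENNReal.mul_div_mul_comm]
            · simp [ENNReal.rpow_eq_zero_iff, hF0, hFt]
            · simp [ENNReal.rpow_eq_zero_iff, hF0, hFt]
        _ ≤ h (a * x + b * y) / M := by gcongr; exact H x y)
  simp only [ENNReal.ofReal_toReal (hft _), ENNReal.ofReal_toReal (hgt _),
    ENNReal.ofReal_toReal (hht _)] at key
  have integ : (∫⁻ x, f x) ^ a * (∫⁻ x, g x) ^ b / M ≤ (∫⁻ x, h x) / M := by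
    calc (∫⁻ x, f x) ^ a * (∫⁻ x, g x) ^ b / M
        = ((∫⁻ x, f x) / F) ^ a * ((∫⁻ x, g x) / G) ^ b := by
          rw [ENNReal.div_rpow_of_nonneg _ _ ha.le, ENNReal.div_rpow_of_nonneg _ _ hb.le,
            ENNReal.mul_div_mul_comm]
          · simp [ENNReal.rpow_eq_zero_iff, hF0, hFt]
          · simp [ENNReal.rpow_eq_zero_iff, hF0, hFt]
      _ = (∫⁻ x, f x / F) ^ a * (∫⁻ x, g x / G) ^ b := by
          simp only [div_eq_mul_inv, lintegral_mul_const _ hf, lintegral_mul_const _ hg]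
      _ ≤ _ := (ennreal_geom_le_arith ha hb hab _ _).trans key
      _ ≤ ∫⁻ x, h x / M := lintegral_mono fun x => min_le_left _ _
      _ = (∫⁻ x, h x) / M := by simp only [div_eq_mul_inv, lintegral_mul_const _ hh]
  simp only [div_eq_mul_inv] at integ
  exact (ENNReal.mul_le_mul_iff_left (ENNReal.inv_ne_zero.2 hMt) (ENNReal.inv_ne_top.2 hM0)).1 integ

theorem prekopa_leindler_real {a b : ℝ} (ha : 0 < a) (hb : 0 < b) (hab : a + b = 1)
    {f g h : ℝ → ENNReal} (hf : Measurable f) (hg : Measurable g) (hh : Measurable h)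
    (H : ∀ x y, f x ^ a * g y ^ b ≤ h (a * x + b * y)) :
    (∫⁻ x, f x) ^ a * (∫⁻ x, g x) ^ b ≤ ∫⁻ x, h x := by
  rcases eq_or_ne (∫⁻ x, f x) 0 with hf0 | hf0
  · simp [hf0, ha]
  rcases eq_or_ne (∫⁻ x, g x) 0 with hg0 | hg0
  · simp [hg0, hb]
  have trunc : ∀ {u : ℝ → ENNReal}, Measurable u →
      Filter.Tendsto (fun N : ℕ => ∫⁻ x, min (u x) N) Filter.atTop (nhds (∫⁻ x, u x)) := by
    intro u hu
    refine lintegral_tendsto_of_tendsto_of_monotone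
      (fun N => (hu.min measurable_const).aemeasurable) (.of_forall fun x N N' hNN' => ?_)
      (.of_forall fun x => ?_)
    · dsimp only
      gcongr
    · simpa using (tendsto_const_nhds (x := u x)).min ENNReal.tendsto_nat_nhds_top
  refine le_of_tendsto (ENNReal.Tendsto.mul
    ((ENNReal.continuous_rpow_const (y := a)).continuousAt.tendsto.comp (trunc hf)) (.inl ?_)
    ((ENNReal.continuous_rpow_const (y := b)).continuousAt.tendsto.comp (trunc hg)) (.inl ?_))
    (.of_forall fun N => ?_)
  · simp [hf0, ha, ENNReal.rpow_eq_zero_iff, ha.not_gt]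
  · simp [hg0, hb, ENNReal.rpow_eq_zero_iff, hb.not_gt]
  refine prekopa_leindler_real_of_le ha hb hab (hf.min measurable_const) (hg.min measurable_const)
    hh (N := N) (by simp) (fun x => min_le_right _ _) (fun x => min_le_right _ _) fun x y => ?_
  refine le_trans ?_ (H x y)
  gcongr <;> exact min_le_left _ _

/-- The **Prékopa–Leindler inequality** on `Fin n → ℝ`. -/
theorem prekopa_leindler_pi {a b : ℝ} (ha : 0 < a) (hb : 0 < b) (hab : a + b = 1) (n : ℕ)
    {f g h : (Fin n → ℝ) → ENNReal} (hf : Measurable f) (hg : Measurable g) (hh : Measurable h)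
    (H : ∀ x y, f x ^ a * g y ^ b ≤ h (a • x + b • y)) :
    (∫⁻ x, f x) ^ a * (∫⁻ x, g x) ^ b ≤ ∫⁻ x, h x := by
  induction n with
  | zero =>
    have h0 : ∀ u : (Fin 0 → ℝ) → ENNReal, ∫⁻ x, u x = u default := fun u => by
      rw [volume_pi, Measure.pi_of_empty _ default, lintegral_dirac]
    simpa only [h0, Subsingleton.elim (a • default + b • default) (default : Fin 0 → ℝ)]
      using H default default
  | succ n ih =>
    have hcons : ∀ p : ℝ × (Fin n → ℝ),
        (MeasurableEquiv.piFinSuccAbove (fun _ : Fin (n + 1) => ℝ) 0).symm p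
          = Fin.cons p.1 p.2 := fun p => by
      ext i
      refine Fin.cases ?_ (fun j => ?_) i <;> simp
    have split : ∀ {u : (Fin (n + 1) → ℝ) → ENNReal}, Measurable u →
        ∫⁻ x, u x = ∫⁻ s : ℝ, ∫⁻ x : Fin n → ℝ, u (Fin.cons s x) := by
      intro u hu
      have e := (volume_preserving_piFinSuccAbove (fun _ : Fin (n + 1) => ℝ) 0).symm
      rw [← e.lintegral_comp hu, Measure.volume_eq_prod, lintegral_prod]
      · simp only [hcons]
      · exact (hu.comp e.measurable).aemeasurable
    have meas : ∀ {u : (Fin (n + 1) → ℝ) → ENNReal}, Measurable u →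
        Measurable fun p : ℝ × (Fin n → ℝ) => u (Fin.cons p.1 p.2) := by
      intro u hu
      simp only [← hcons]
      exact hu.comp (MeasurableEquiv.measurable _)
    rw [split hf, split hg, split hh]
    refine prekopa_leindler_real ha hb hab (meas hf).lintegral_prod_right'
      (meas hg).lintegral_prod_right' (meas hh).lintegral_prod_right' fun s s' => ?_
    refine ih ((meas hf).comp measurable_prodMk_left) ((meas hg).comp measurable_prodMk_left)
      ((meas hh).comp measurable_prodMk_left) fun x y => ?_
    convert H (Fin.cons s x) (Fin.cons s' y) using 2
    ext i
    refine Fin.cases ?_ (fun j => ?_) i <;> simp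

/-- The **Prékopa–Leindler inequality** on Euclidean space. -/
theorem prekopa_leindler {a b : ℝ} (ha : 0 < a) (hb : 0 < b) (hab : a + b = 1) {n : ℕ}
    {f g h : EuclideanSpace ℝ (Fin n) → ENNReal}
    (hf : Measurable f) (hg : Measurable g) (hh : Measurable h)
    (H : ∀ x y, f x ^ a * g y ^ b ≤ h (a • x + b • y)) :
    (∫⁻ x, f x) ^ a * (∫⁻ x, g x) ^ b ≤ ∫⁻ x, h x := by
  have e := PiLp.volume_preserving_toLp (Fin n)
  rw [← e.lintegral_comp hf, ← e.lintegral_comp hg, ← e.lintegral_comp hh]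
  exact prekopa_leindler_pi ha hb hab n (hf.comp e.measurable) (hg.comp e.measurable)
    (hh.comp e.measurable) fun x y => H _ _

theorem le_of_forall_small_pos_le_add_mul {x y k s₀ : ℝ} (hs₀ : 0 < s₀)
    (h : ∀ s, 0 < s → s ≤ s₀ → x ≤ y + s * k) : x ≤ y := by
  have ht : Filter.Tendsto (fun s : ℝ => y + s * k) (nhdsWithin 0 (Ioi 0)) (nhds y) := by
    have : Continuous fun s : ℝ => y + s * k := by fun_prop
    simpa using (this.tendsto 0).mono_left nhdsWithin_le_nhds
  refine ge_of_tendsto ht ?_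
  filter_upwards [Ioc_mem_nhdsGT hs₀] with s hs using h s hs.1 hs.2

section LogIntegral

variable {n : ℕ} {A B C : Set (EuclideanSpace ℝ (Fin n))}

theorem setIntegral_exp_pos (hA : IsCompact A) (hA0 : 0 < volume.real A)
    {ψ : EuclideanSpace ℝ (Fin n) → ℝ} (hψ : Continuous ψ) :
    0 < ∫ x in A, Real.exp (ψ x) := by
  have : NeZero (volume.restrict A) := ⟨by
    rw [Ne, Measure.restrict_eq_zero]
    intro h
    simp [Measure.real, h] at hA0⟩
  exact integral_exp_pos ((Real.continuous_exp.comp hψ).continuousOn.integrableOn_compact hA)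

theorem prekopa_leindler_log {a b : ℝ} (ha : 0 < a) (hb : 0 < b) (hab : a + b = 1)
    (hA : IsCompact A) (hB : IsCompact B) (hC : IsCompact C)
    (hA0 : 0 < volume.real A) (hB0 : 0 < volume.real B)
    {ψ₀ ψ₁ ψ₂ : EuclideanSpace ℝ (Fin n) → ℝ}
    (h₀ : Continuous ψ₀) (h₁ : Continuous ψ₁) (h₂ : Continuous ψ₂)
    (hABC : ∀ p ∈ A, ∀ q ∈ B, a • p + b • q ∈ C)
    (H : ∀ p ∈ A, ∀ q ∈ B, a * ψ₀ p + b * ψ₁ q ≤ ψ₂ (a • p + b • q)) :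
    a * Real.log (∫ x in A, Real.exp (ψ₀ x)) + b * Real.log (∫ x in B, Real.exp (ψ₁ x))
      ≤ Real.log (∫ x in C, Real.exp (ψ₂ x)) := by
  have hlint : ∀ {S : Set (EuclideanSpace ℝ (Fin n))} {ψ : EuclideanSpace ℝ (Fin n) → ℝ},
      IsCompact S → Continuous ψ →
      ∫⁻ x, S.indicator (fun x => ENNReal.ofReal (Real.exp (ψ x))) x
        = ENNReal.ofReal (∫ x in S, Real.exp (ψ x)) := by
    intro S ψ hS hψ
    rw [lintegral_indicator hS.measurableSet, ofReal_integral_eq_lintegral_ofReal]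
    · exact (Real.continuous_exp.comp hψ).continuousOn.integrableOn_compact hS
    · exact .of_forall fun x => (Real.exp_pos _).le
  have hmeas : ∀ {S : Set (EuclideanSpace ℝ (Fin n))} {ψ : EuclideanSpace ℝ (Fin n) → ℝ},
      IsCompact S → Continuous ψ →
      Measurable (S.indicator (fun x => ENNReal.ofReal (Real.exp (ψ x)))) := fun hS hψ =>
    (ENNReal.measurable_ofReal.comp (Real.continuous_exp.comp hψ).measurable).indicator
      hS.measurableSet
  have key := prekopa_leindler ha hb hab (hmeas hA h₀) (hmeas hB h₁) (hmeas hC h₂) (by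
    intro p q
    by_cases hp : p ∈ A
    · by_cases hq : q ∈ B
      · rw [indicator_of_mem hp, indicator_of_mem hq, indicator_of_mem (hABC p hp q hq),
          ENNReal.ofReal_rpow_of_pos (Real.exp_pos _), ENNReal.ofReal_rpow_of_pos (Real.exp_pos _),
          ← ENNReal.ofReal_mul (by positivity), ← Real.exp_mul, ← Real.exp_mul, ← Real.exp_add]
        refine ENNReal.ofReal_le_ofReal (Real.exp_le_exp.2 ?_)
        linarith [H p hp q hq]
      · simp [indicator_of_notMem hq, hb]
    · simp [indicator_of_notMem hp, ha])
  have hIA := setIntegral_exp_pos hA hA0 h₀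
  have hIB := setIntegral_exp_pos hB hB0 h₁
  rw [hlint hA h₀, hlint hB h₁, hlint hC h₂, ENNReal.ofReal_rpow_of_pos hIA,
    ENNReal.ofReal_rpow_of_pos hIB, ← ENNReal.ofReal_mul (by positivity),
    ENNReal.ofReal_le_ofReal_iff (integral_nonneg fun x => (Real.exp_pos _).le)] at key
  have := Real.log_le_log (by positivity) key
  rwa [Real.log_mul (by positivity) (by positivity), Real.log_rpow hIA, Real.log_rpow hIB] at this

theorem log_setIntegral_exp_ge (hA : IsCompact A) (hA0 : 0 < volume.real A)
    {ψ : EuclideanSpace ℝ (Fin n) → ℝ} (hψ : Continuous ψ) :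
    Real.log (volume.real A) + (∫ x in A, ψ x) / volume.real A
      ≤ Real.log (∫ x in A, Real.exp (ψ x)) := by
  set V := volume.real A
  set m := (∫ x in A, ψ x) / V
  have integ : ∀ {u : EuclideanSpace ℝ (Fin n) → ℝ}, Continuous u → IntegrableOn u A :=
    fun hu => hu.continuousOn.integrableOn_compact hA
  rw [Real.le_log_iff_exp_le (setIntegral_exp_pos hA hA0 hψ), Real.exp_add, Real.exp_log hA0]
  calc V * Real.exp m = ∫ x in A, Real.exp m * (1 + (ψ x - m)) := by
        have hc : IntegrableOn (fun _ : EuclideanSpace ℝ (Fin n) => (1 : ℝ)) A :=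
          integ continuous_const
        rw [integral_const_mul, integral_add hc (integ (by fun_prop)),
          integral_sub (integ hψ) (integ continuous_const)]
        have : (∫ x in A, ψ x) = V * m := by simp only [m]; field_simp
        rw [this]
        simp only [setIntegral_const, smul_eq_mul]
        change _ = _ * (V * 1 + (V * m - V * m))
        ring
    _ ≤ ∫ x in A, Real.exp (ψ x) := by
        refine integral_mono (integ (by fun_prop)) (integ (by fun_prop)) fun x => ?_
        calc Real.exp m * (1 + (ψ x - m)) ≤ Real.exp m * Real.exp (ψ x - m) := by
              gcongr
              linarith [Real.add_one_le_exp (ψ x - m)]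
          _ = Real.exp (ψ x) := by rw [← Real.exp_add]; ring_nf

theorem log_setIntegral_exp_mul_le (hC : IsCompact C) (hC0 : 0 < volume.real C)
    {ψ : EuclideanSpace ℝ (Fin n) → ℝ} (hψ : Continuous ψ) {M s : ℝ}
    (hM : ∀ x ∈ C, |ψ x| ≤ M) (hs : 0 ≤ s) (hsM : s * M ≤ 1) :
    Real.log (∫ x in C, Real.exp (s * ψ x)) ≤
      Real.log (volume.real C) + s * ((∫ x in C, ψ x) / volume.real C) + s ^ 2 * M ^ 2 := by
  set V := volume.real C
  have integ : ∀ {u : EuclideanSpace ℝ (Fin n) → ℝ}, Continuous u → IntegrableOn u C :=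
    fun hu => hu.continuousOn.integrableOn_compact hC
  have hpos := setIntegral_exp_pos hC hC0 (ψ := fun x => s * ψ x) (by fun_prop)
  have hle : ∫ x in C, Real.exp (s * ψ x) ≤ V * (1 + s ^ 2 * M ^ 2) + s * ∫ x in C, ψ x := by
    calc ∫ x in C, Real.exp (s * ψ x) ≤ ∫ x in C, ((1 + s ^ 2 * M ^ 2) + s * ψ x) := by
          refine setIntegral_mono_on (integ (by fun_prop)) (integ (by fun_prop)) hC.measurableSet
            fun x hx => ?_
          have h1 : |s * ψ x| ≤ s * M := by
            rw [abs_mul, abs_of_nonneg hs]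
            exact mul_le_mul_of_nonneg_left (hM x hx) hs
          have h2 := (abs_le.1 (Real.abs_exp_sub_one_sub_id_le (h1.trans hsM))).2
          have h3 : (s * ψ x) ^ 2 ≤ (s * M) ^ 2 :=
            sq_le_sq' (by linarith [(abs_le.1 h1).1]) (abs_le.1 h1).2
          linarith [mul_pow s M 2]
      _ = _ := by
          rw [integral_add (integ continuous_const) (integ (by fun_prop)), integral_const_mul]
          simp [V]
  have := Real.log_le_sub_one_of_pos (div_pos hpos hC0)
  rw [Real.log_div hpos.ne' hC0.ne'] at this
  have h4 : (∫ x in C, Real.exp (s * ψ x)) / V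
      ≤ (1 + s ^ 2 * M ^ 2) + s * ((∫ x in C, ψ x) / V) := by
    rw [div_le_iff₀ hC0]
    refine hle.trans_eq ?_
    field_simp
  linarith

theorem setIntegral_combination_le {a b V : ℝ} (ha : 0 < a) (hb : 0 < b) (hab : a + b = 1)
    (hA : IsCompact A) (hB : IsCompact B) (hC : IsCompact C) (hV : 0 < V)
    (hAV : volume.real A = V) (hBV : volume.real B = V) (hCV : volume.real C = V)
    {ψ₀ ψ₁ ψ₂ : EuclideanSpace ℝ (Fin n) → ℝ}
    (h₀ : Continuous ψ₀) (h₁ : Continuous ψ₁) (h₂ : Continuous ψ₂)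
    (hABC : ∀ p ∈ A, ∀ q ∈ B, a • p + b • q ∈ C)
    (H : ∀ p ∈ A, ∀ q ∈ B, a * ψ₀ p + b * ψ₁ q ≤ ψ₂ (a • p + b • q)) :
    a * (∫ x in A, ψ₀ x) + b * (∫ x in B, ψ₁ x) ≤ ∫ x in C, ψ₂ x := by
  obtain ⟨M, hM⟩ := hC.exists_bound_of_continuousOn h₂.continuousOn
  have hM' : ∀ x ∈ C, |ψ₂ x| ≤ |M| + 1 := fun x hx =>
    (hM x hx).trans (by linarith [le_abs_self M])
  have hMpos : 0 < |M| + 1 := by positivity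
  refine le_of_forall_small_pos_le_add_mul (k := V * (|M| + 1) ^ 2) (inv_pos.2 hMpos)
    fun s hs hsM => ?_
  have hup := log_setIntegral_exp_mul_le hC (hCV ▸ hV) h₂ hM' hs.le
    (by rwa [← le_div_iff₀ hMpos, one_div])
  have hlA := log_setIntegral_exp_ge hA (hAV ▸ hV) (ψ := fun x => s * ψ₀ x) (by fun_prop)
  have hlB := log_setIntegral_exp_ge hB (hBV ▸ hV) (ψ := fun x => s * ψ₁ x) (by fun_prop)
  have hPL := prekopa_leindler_log ha hb hab hA hB hC (hAV ▸ hV) (hBV ▸ hV)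
    (ψ₀ := fun x => s * ψ₀ x) (ψ₁ := fun x => s * ψ₁ x) (ψ₂ := fun x => s * ψ₂ x)
    (by fun_prop) (by fun_prop) (by fun_prop) hABC fun p hp q hq => by
      have := mul_le_mul_of_nonneg_left (H p hp q hq) hs.le
      linarith
  rw [integral_const_mul, hAV] at hlA
  rw [integral_const_mul, hBV] at hlB
  rw [hCV] at hup
  set I₀ := ∫ x in A, ψ₀ x
  set I₁ := ∫ x in B, ψ₁ x
  set I₂ := ∫ x in C, ψ₂ x
  have h5 : a * (Real.log V + s * I₀ / V) + b * (Real.log V + s * I₁ / V)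
      ≤ Real.log V + s * (I₂ / V) + s ^ 2 * (|M| + 1) ^ 2 :=
    (add_le_add (mul_le_mul_of_nonneg_left hlA ha.le)
      (mul_le_mul_of_nonneg_left hlB hb.le)).trans (hPL.trans hup)
  have h6 : (s / V) * (a * I₀ + b * I₁) ≤ (s / V) * (I₂ + s * (V * (|M| + 1) ^ 2)) := by
    have e1 : (s / V) * (a * I₀ + b * I₁) = a * (Real.log V + s * I₀ / V)
        + b * (Real.log V + s * I₁ / V) - Real.log V := by
      rw [eq_sub_of_add_eq' hab]; ring
    have e2 : (s / V) * (I₂ + s * (V * (|M| + 1) ^ 2))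
        = s * (I₂ / V) + s ^ 2 * (|M| + 1) ^ 2 := by
      field_simp
    rw [e1, e2]
    linarith
  exact le_of_mul_le_mul_left h6 (by positivity)

theorem one_add_half_sq_le_cosh (x : ℝ) : 1 + x ^ 2 / 2 ≤ Real.cosh x := by
  have h1 : |x / 2| ≤ Real.sinh |x / 2| := Real.self_le_sinh_iff.2 (abs_nonneg _)
  have h2 : |x / 2| ^ 2 ≤ Real.sinh |x / 2| ^ 2 := by gcongr
  have h3 : Real.cosh x = 1 + 2 * Real.sinh |x / 2| ^ 2 := by
    rw [← Real.cosh_abs, show |x| = 2 * |x / 2| by rw [abs_div]; simp; ring, Real.cosh_two_mul,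
      Real.cosh_sq']
    ring
  rw [sq_abs] at h2
  linarith

theorem setIntegral_exp_eq_setIntegral_cosh (hA : IsCompact A) (hsymm : ∀ x ∈ A, -x ∈ A)
    (φ : StrongDual ℝ (EuclideanSpace ℝ (Fin n))) (r : ℝ) :
    ∫ x in A, Real.exp (r * φ x) = ∫ x in A, Real.cosh (r * φ x) := by
  have hneg : ∫ x in A, Real.exp (-(r * φ x)) = ∫ x in A, Real.exp (r * φ x) := by
    have hpre : (fun x : EuclideanSpace ℝ (Fin n) => -x) ⁻¹' A = A := by
      ext x
      exact ⟨fun h => by simpa using hsymm _ h, hsymm x⟩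
    have := (Measure.measurePreserving_neg
      (volume : Measure (EuclideanSpace ℝ (Fin n)))).setIntegral_preimage_emb
      (MeasurableEquiv.neg _).measurableEmbedding (fun x => Real.exp (r * φ x)) A
    simpa [hpre] using this
  have integ : ∀ {u : EuclideanSpace ℝ (Fin n) → ℝ}, Continuous u → IntegrableOn u A :=
    fun hu => hu.continuousOn.integrableOn_compact hA
  simp only [Real.cosh_eq]
  rw [integral_div, integral_add (integ (by fun_prop)) (integ (by fun_prop)), hneg]
  ring

theorem setIntegral_sq_combination_le {a b V : ℝ} (ha : 0 < a) (hb : 0 < b) (hab : a + b = 1)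
    (hA : IsCompact A) (hB : IsCompact B) (hC : IsCompact C) (hV : 0 < V)
    (hAV : volume.real A = V) (hBV : volume.real B = V) (hCV : volume.real C = V)
    (hAs : ∀ x ∈ A, -x ∈ A) (hBs : ∀ x ∈ B, -x ∈ B) (hCs : ∀ x ∈ C, -x ∈ C)
    (hABC : ∀ p ∈ A, ∀ q ∈ B, a • p + b • q ∈ C)
    (φ : StrongDual ℝ (EuclideanSpace ℝ (Fin n))) :
    a * (∫ x in A, φ x ^ 2) + b * (∫ x in B, φ x ^ 2) ≤ ∫ x in C, φ x ^ 2 := by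
  obtain ⟨M, hM⟩ := hC.exists_bound_of_continuousOn
    (f := fun x => φ x ^ 2) (by fun_prop)
  have hM' : ∀ x ∈ C, |φ x ^ 2| ≤ |M| + 1 := fun x hx =>
    (hM x hx).trans (by linarith [le_abs_self M])
  have hMpos : 0 < |M| + 1 := by positivity
  have lower : ∀ {S : Set (EuclideanSpace ℝ (Fin n))}, IsCompact S → volume.real S = V →
      (∀ x ∈ S, -x ∈ S) → ∀ s, 0 ≤ s →
      Real.log V + s * ((∫ x in S, φ x ^ 2) / V) - s ^ 2 * ((∫ x in S, φ x ^ 2) / V) ^ 2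
        ≤ Real.log (∫ x in S, Real.exp (√(2 * s) * φ x)) := by
    intro S hS hSV hSs s hs
    have integ : ∀ {u : EuclideanSpace ℝ (Fin n) → ℝ}, Continuous u → IntegrableOn u S :=
      fun hu => hu.continuousOn.integrableOn_compact hS
    have hm : 0 ≤ (∫ x in S, φ x ^ 2) / V :=
      div_nonneg (integral_nonneg fun x => sq_nonneg _) hV.le
    set m := (∫ x in S, φ x ^ 2) / V with hmdef
    have h1 : V * (1 + s * m) ≤ ∫ x in S, Real.exp (√(2 * s) * φ x) := by
      rw [setIntegral_exp_eq_setIntegral_cosh hS hSs]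
      calc V * (1 + s * m) = ∫ x in S, (1 + s * φ x ^ 2) := by
            rw [integral_add (integ continuous_const) (integ (by fun_prop)), integral_const_mul]
            simp [hSV, hmdef]
            field_simp
        _ ≤ _ := by
            refine integral_mono (integ (by fun_prop)) (integ (by fun_prop)) fun x => ?_
            refine le_trans (le_of_eq ?_) (one_add_half_sq_le_cosh _)
            rw [mul_pow, Real.sq_sqrt (by positivity)]
            ring
    have hsm : 0 ≤ s * m := mul_nonneg hs hm
    refine le_trans ?_ (Real.log_le_log (by positivity) h1)
    rw [Real.log_mul hV.ne' (by positivity)]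
    have h2 := Real.one_sub_inv_le_log_of_pos (x := 1 + s * m) (by positivity)
    have h3 : s * m - (s * m) ^ 2 ≤ 1 - (1 + s * m)⁻¹ := by
      have : 1 - (1 + s * m)⁻¹ - (s * m - (s * m) ^ 2) = (s * m) ^ 3 / (1 + s * m) := by
        field_simp
        ring
      have : 0 ≤ (s * m) ^ 3 / (1 + s * m) := by positivity
      linarith
    linarith [mul_pow s m 2]
  set I₀ := ∫ x in A, φ x ^ 2
  set I₁ := ∫ x in B, φ x ^ 2
  set I₂ := ∫ x in C, φ x ^ 2
  refine le_of_forall_small_pos_le_add_mul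
    (k := V * ((|M| + 1) ^ 2 + a * (I₀ / V) ^ 2 + b * (I₁ / V) ^ 2)) (inv_pos.2 hMpos)
    fun s hs hsM => ?_
  have hup := log_setIntegral_exp_mul_le hC (hCV ▸ hV) (ψ := fun x => φ x ^ 2) (by fun_prop)
    hM' hs.le (by rwa [← le_div_iff₀ hMpos, one_div])
  rw [hCV] at hup
  have hcosh : Real.log (∫ x in C, Real.exp (√(2 * s) * φ x))
      ≤ Real.log (∫ x in C, Real.exp (s * φ x ^ 2)) := by
    refine Real.log_le_log (setIntegral_exp_pos hC (hCV ▸ hV) (by fun_prop)) ?_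
    rw [setIntegral_exp_eq_setIntegral_cosh hC hCs]
    have integ : ∀ {u : EuclideanSpace ℝ (Fin n) → ℝ}, Continuous u → IntegrableOn u C :=
      fun hu => hu.continuousOn.integrableOn_compact hC
    refine integral_mono (integ (by fun_prop)) (integ (by fun_prop)) fun x => ?_
    refine (Real.cosh_le_exp_half_sq _).trans_eq ?_
    rw [mul_pow, Real.sq_sqrt (by positivity)]
    ring_nf
  have hPL := prekopa_leindler_log ha hb hab hA hB hC (hAV ▸ hV) (hBV ▸ hV)
    (ψ₀ := fun x => √(2 * s) * φ x) (ψ₁ := fun x => √(2 * s) * φ x)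
    (ψ₂ := fun x => √(2 * s) * φ x)
    (by fun_prop) (by fun_prop) (by fun_prop) hABC fun p hp q hq => by
      simp only [map_add, map_smul, smul_eq_mul]
      linarith
  have h5 := (add_le_add (mul_le_mul_of_nonneg_left (lower hA hAV hAs s hs.le) ha.le)
    (mul_le_mul_of_nonneg_left (lower hB hBV hBs s hs.le) hb.le)).trans
      (hPL.trans (hcosh.trans hup))
  have h6 : (s / V) * (a * I₀ + b * I₁)
      ≤ (s / V) * (I₂ + s * (V * ((|M| + 1) ^ 2 + a * (I₀ / V) ^ 2 + b * (I₁ / V) ^ 2))) := by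
    have e1 : (s / V) * (a * I₀ + b * I₁)
        = a * (Real.log V + s * (I₀ / V) - s ^ 2 * (I₀ / V) ^ 2)
          + b * (Real.log V + s * (I₁ / V) - s ^ 2 * (I₁ / V) ^ 2) - Real.log V
          + s ^ 2 * (a * (I₀ / V) ^ 2 + b * (I₁ / V) ^ 2) := by
      rw [eq_sub_of_add_eq' hab]; ring
    have e2 : (s / V) * (I₂ + s * (V * ((|M| + 1) ^ 2 + a * (I₀ / V) ^ 2 + b * (I₁ / V) ^ 2)))
        = s * (I₂ / V) + s ^ 2 * (|M| + 1) ^ 2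
          + s ^ 2 * (a * (I₀ / V) ^ 2 + b * (I₁ / V) ^ 2) := by
      field_simp
      ring
    rw [e1, e2]
    linarith
  exact le_of_mul_le_mul_left h6 (by positivity)

end LogIntegral

theorem nonempty_interior_of_volume_pos {n : ℕ} {B : Set (EuclideanSpace ℝ (Fin n))}
    (hB : Convex ℝ B) (hB0 : volume B ≠ 0) : (interior B).Nonempty := by
  by_contra h
  rw [not_nonempty_iff_eq_empty] at h
  refine hB0 (measure_mono_null ?_ (hB.addHaar_frontier volume))
  rw [frontier, h, sdiff_empty]
  exact subset_closure

theorem volume_interior_eq {n : ℕ} {B : Set (EuclideanSpace ℝ (Fin n))} (hB : Convex ℝ B) :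
    volume (interior B) = volume B :=
  measure_interior_of_null_frontier (hB.addHaar_frontier volume)

/-- The rigidity part of the Brunn–Minkowski inequality for centrally symmetric bodies. -/
theorem subset_of_volume_combination_eq {n : ℕ} {A B C : Set (EuclideanSpace ℝ (Fin n))}
    {a b V : ℝ} (ha : 0 < a) (hb : 0 < b) (hab : a + b = 1)
    (hA : IsCompact A) (hB : IsCompact B) (hC : IsCompact C)
    (hAc : Convex ℝ A) (hBc : Convex ℝ B) (hV : 0 < V)
    (hAV : volume.real A = V) (hBV : volume.real B = V) (hCV : volume.real C = V)
    (hAs : ∀ x ∈ A, -x ∈ A) (hBs : ∀ x ∈ B, -x ∈ B) (hCs : ∀ x ∈ C, -x ∈ C)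
    (hABC : ∀ p ∈ A, ∀ q ∈ B, a • p + b • q ∈ C) : B ⊆ A := by
  intro q₀ hq₀
  by_contra hq₀A
  obtain ⟨φ, c, hφA, hφq⟩ := geometric_hahn_banach_closed_point hAc hA.isClosed hq₀A
  set w : EuclideanSpace ℝ (Fin n) → ℝ := fun x => max (φ x - c) 0
  have hwc : Continuous w := by fun_prop
  have integ : ∀ {S : Set (EuclideanSpace ℝ (Fin n))} {u : EuclideanSpace ℝ (Fin n) → ℝ},
      IsCompact S → Continuous u → IntegrableOn u S :=
    fun hS hu => hu.continuousOn.integrableOn_compact hS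
  have hw0 : ∀ x, 0 ≤ w x := fun x => le_max_right _ _
  have hwpos : 0 < ∫ x in B, w x := by
    rw [setIntegral_pos_iff_support_of_nonneg_ae (.of_forall hw0) (integ hB hwc)]
    have hopen : IsOpen ({x | c < φ x} ∩ interior B) :=
      (isOpen_lt continuous_const φ.continuous).inter isOpen_interior
    have hBint := nonempty_interior_of_volume_pos hBc fun h => by
      simp [Measure.real, h] at hBV
      exact hV.ne hBV
    have hmem : q₀ ∈ closure (interior B) := by
      rw [hBc.closure_interior_eq_closure_of_nonempty_interior hBint]
      exact subset_closure hq₀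
    have hne : ({x | c < φ x} ∩ interior B).Nonempty :=
      mem_closure_iff.1 hmem _ (isOpen_lt continuous_const φ.continuous) hφq
    refine (hopen.measure_pos volume hne).trans_le (measure_mono ?_)
    rintro x ⟨hx, hxB⟩
    refine ⟨?_, interior_subset hxB⟩
    have : 0 < w x := lt_max_of_lt_left (sub_pos.2 hx)
    exact this.ne'
  have hsq := setIntegral_sq_combination_le ha hb hab hA hB hC hV hAV hBV hCV hAs hBs hCs hABC φ
  refine hwpos.not_ge (le_of_forall_small_pos_le_add_mul (k := V / 4) one_pos fun ε hε _ => ?_)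
  have hlin := setIntegral_combination_le ha hb hab hA hB hC hV hAV hBV hCV
    (ψ₀ := fun x => -φ x ^ 2 - b * ε ^ 2 / 4) (ψ₁ := fun x => -φ x ^ 2 + a * ε * w x)
    (ψ₂ := fun x => -φ x ^ 2) (by fun_prop) (by fun_prop) (by fun_prop) hABC (by
      intro p hp q _
      simp only [map_add, map_smul, smul_eq_mul]
      have h1 : w q ≤ |φ q - φ p| :=
        max_le ((sub_le_sub_left (hφA p hp).le _).trans (le_abs_self _)) (abs_nonneg _)
      have h2 : ε * w q ≤ (φ q - φ p) ^ 2 + ε ^ 2 / 4 := by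
        have := mul_le_mul_of_nonneg_left h1 hε.le
        nlinarith [sq_nonneg (|φ q - φ p| - ε / 2), sq_abs (φ q - φ p)]
      have h3 := mul_le_mul_of_nonneg_left h2 (mul_pos ha hb).le
      obtain rfl : b = 1 - a := by linarith
      nlinarith)
  rw [integral_sub (integ hA (by fun_prop)) (integ hA continuous_const),
    integral_add (integ hB (by fun_prop)) (integ hB (by fun_prop)), integral_neg, integral_neg,
    integral_neg, integral_const_mul] at hlin
  simp only [setIntegral_const, smul_eq_mul, hAV] at hlin
  have h7 : (a * b * ε) * (∫ x in B, w x) ≤ (a * b * ε) * (0 + ε * (V / 4)) := by linarith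
  exact le_of_mul_le_mul_left h7 (by positivity)

section ConvolutionBody

variable {n : ℕ} {K : Set (EuclideanSpace ℝ (Fin n))}

/-- The intersection `K ∩ (x + K)`, translated so that its centre of symmetry is the origin. -/
def centredInter (K : Set (EuclideanSpace ℝ (Fin n))) (x : EuclideanSpace ℝ (Fin n)) :
    Set (EuclideanSpace ℝ (Fin n)) :=
  {v | v + (1 / 2 : ℝ) • x ∈ K ∧ v - (1 / 2 : ℝ) • x ∈ K}

theorem volume_centredInter (K : Set (EuclideanSpace ℝ (Fin n)))
    (x : EuclideanSpace ℝ (Fin n)) :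
    volume (centredInter K x) = volume (K ∩ (fun z => x + z) '' K) := by
  rw [← measure_preimage_add_right volume ((1 / 2 : ℝ) • x) (K ∩ (fun z => x + z) '' K)]
  congr 1
  ext v
  simp only [centredInter, mem_ofPred_eq, preimage_inter, mem_inter_iff, mem_preimage,
    image_add_left]
  rw [show -x + (v + (1 / 2 : ℝ) • x) = v - (1 / 2 : ℝ) • x by module]

theorem isCompact_centredInter (hK : IsCompact K) (x : EuclideanSpace ℝ (Fin n)) :
    IsCompact (centredInter K x) := by
  have h1 : IsCompact ((fun v => v + (1 / 2 : ℝ) • x) ⁻¹' K) :=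
    (Homeomorph.addRight ((1 / 2 : ℝ) • x)).isCompact_preimage.2 hK
  exact h1.inter_right (hK.isClosed.preimage
    (by fun_prop : Continuous fun v => v - (1 / 2 : ℝ) • x))

theorem combination_mem_centredInter (hK : Convex ℝ K) {a b : ℝ} (ha : 0 ≤ a) (hb : 0 ≤ b)
    (hab : a + b = 1) {x y p q : EuclideanSpace ℝ (Fin n)} (hp : p ∈ centredInter K x)
    (hq : q ∈ centredInter K y) : a • p + b • q ∈ centredInter K (a • x + b • y) := by
  refine ⟨?_, ?_⟩
  · convert hK hp.1 hq.1 ha hb hab using 1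
    module
  · convert hK hp.2 hq.2 ha hb hab using 1
    module

theorem convex_centredInter (hK : Convex ℝ K) (x : EuclideanSpace ℝ (Fin n)) :
    Convex ℝ (centredInter K x) := by
  intro p hp q hq a b ha hb hab
  simpa [← add_smul, hab] using combination_mem_centredInter hK ha hb hab hp hq

theorem neg_mem_centredInter (hK : K = -K) (x v : EuclideanSpace ℝ (Fin n))
    (hv : v ∈ centredInter K x) : -v ∈ centredInter K x := by
  have hneg : ∀ z ∈ K, -z ∈ K := fun z hz => by
    rw [hK] at hz
    exact hz
  refine ⟨?_, ?_⟩
  · convert hneg _ hv.2 using 1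
    module
  · convert hneg _ hv.1 using 1
    module

theorem add_smul_mem_centredInter (hK : Convex ℝ K) {a b : ℝ} (ha : 0 < a) (hb : 0 < b)
    (hab : a + b = 1) {x y p : EuclideanSpace ℝ (Fin n)} (hx : p ∈ centredInter K x)
    (hy : p ∈ centredInter K y) :
    p + (a * b / 2) • (y - x) ∈ centredInter K (a • x + b • y) := by
  obtain rfl : a = 1 - b := by linarith
  have hbb : 0 < b * (1 - b) := mul_pos hb ha
  refine ⟨?_, ?_⟩
  · convert hK hx.1 hy.1 (a := 1 - (b + (1 - b) * b)) (b := b + (1 - b) * b)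
      (by nlinarith) (by nlinarith) (by ring) using 1
    module
  · convert hK hx.2 hy.2 (a := 1 - (b - (1 - b) * b)) (b := b - (1 - b) * b)
      (by nlinarith) (by nlinarith) (by ring) using 1
    module

theorem lt_volume_centredInter (hK : IsCompact K) (hKc : Convex ℝ K) (hKs : K = -K)
    {δ : ENNReal} (hδ : 0 < δ) {x y : EuclideanSpace ℝ (Fin n)} (hxy : x ≠ y)
    (hx : δ ≤ volume (centredInter K x)) (hy : δ ≤ volume (centredInter K y))
    {a b : ℝ} (ha : 0 < a) (hb : 0 < b) (hab : a + b = 1) :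
    δ < volume (centredInter K (a • x + b • y)) := by
  set z := a • x + b • y
  have hfin : ∀ u, volume (centredInter K u) ≠ ⊤ := fun u =>
    (isCompact_centredInter hK u).measure_ne_top
  by_contra! hz
  have hPL : volume (centredInter K x) ^ a * volume (centredInter K y) ^ b
      ≤ volume (centredInter K z) := by
    have hm : ∀ u, MeasurableSet (centredInter K u) := fun u =>
      (isCompact_centredInter hK u).measurableSet
    have := prekopa_leindler ha hb hab (f := (centredInter K x).indicator 1)
      (g := (centredInter K y).indicator 1) (h := (centredInter K z).indicator 1)
      (measurable_one.indicator (hm x)) (measurable_one.indicator (hm y))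
      (measurable_one.indicator (hm z)) (by
        intro p q
        by_cases hp : p ∈ centredInter K x
        · by_cases hq : q ∈ centredInter K y
          · have := combination_mem_centredInter hKc ha.le hb.le hab hp hq
            simp [hp, hq, z, this]
          · simp [hq, hb]
        · simp [hp, ha])
    simpa [lintegral_indicator_one, hm] using this
  have hδt : δ ≠ ⊤ := ne_top_of_le_ne_top (hfin x) hx
  have hδsplit : δ = δ ^ a * δ ^ b := by
    rw [← ENNReal.rpow_add_of_nonneg _ _ ha.le hb.le, hab, ENNReal.rpow_one]
  have hx' : volume (centredInter K x) = δ := by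
    refine le_antisymm (not_lt.1 fun h => ?_) hx
    have h1 : δ < volume (centredInter K x) ^ a * δ ^ b := by
      conv_lhs => rw [hδsplit]
      refine (ENNReal.mul_lt_mul_iff_left ?_ ?_).2 (ENNReal.rpow_lt_rpow h ha)
      · simp [ENNReal.rpow_eq_zero_iff, hδ.ne', hδt]
      · exact ENNReal.rpow_ne_top_of_nonneg hb.le hδt
    exact (h1.trans_le ((by gcongr : _ ≤ _).trans hPL)).not_ge hz
  have hy' : volume (centredInter K y) = δ := by
    refine le_antisymm (not_lt.1 fun h => ?_) hy
    have h1 : δ < δ ^ a * volume (centredInter K y) ^ b := by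
      conv_lhs => rw [hδsplit]
      refine (ENNReal.mul_lt_mul_iff_right ?_ ?_).2 (ENNReal.rpow_lt_rpow h hb)
      · simp [ENNReal.rpow_eq_zero_iff, hδ.ne', hδt]
      · exact ENNReal.rpow_ne_top_of_nonneg ha.le hδt
    exact (h1.trans_le ((by gcongr : _ ≤ _).trans hPL)).not_ge hz
  have hz' : volume (centredInter K z) = δ := by
    refine le_antisymm hz ?_
    rw [hx', hy', ← hδsplit] at hPL
    exact hPL
  have hV : 0 < δ.toReal := ENNReal.toReal_pos hδ.ne' hδt
  have rigid : ∀ {u v w : EuclideanSpace ℝ (Fin n)} {c d : ℝ}, 0 < c → 0 < d → c + d = 1 →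
      volume (centredInter K u) = δ → volume (centredInter K v) = δ →
      volume (centredInter K w) = δ →
      (∀ p ∈ centredInter K u, ∀ q ∈ centredInter K v, c • p + d • q ∈ centredInter K w) →
      centredInter K v ⊆ centredInter K u := by
    intro u v w c d hc hd hcd hu hv hw H
    exact subset_of_volume_combination_eq hc hd hcd (isCompact_centredInter hK u)
      (isCompact_centredInter hK v) (isCompact_centredInter hK w) (convex_centredInter hKc u)
      (convex_centredInter hKc v) hV (by rw [Measure.real, hu]) (by rw [Measure.real, hv])
      (by rw [Measure.real, hw]) (neg_mem_centredInter hKs u) (neg_mem_centredInter hKs v)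
      (neg_mem_centredInter hKs w) H
  have hyx : centredInter K y ⊆ centredInter K x := rigid ha hb hab hx' hy' hz'
    fun p hp q hq => combination_mem_centredInter hKc ha.le hb.le hab hp hq
  have hxy' : centredInter K x ⊆ centredInter K y := rigid hb ha (by linarith) hy' hx' hz'
    fun p hp q hq => by
      rw [add_comm]
      exact combination_mem_centredInter hKc ha.le hb.le hab hq hp
  have hxz : centredInter K x ⊆ centredInter K z := fun p hp => by
    simpa [← add_smul, hab] using
      combination_mem_centredInter hKc ha.le hb.le hab hp (hxy' hp)
  have hzx : centredInter K z ⊆ centredInter K x := rigid ha hb hab hx' hz' hz'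
    fun p hp q hq => convex_centredInter hKc z (hxz hp) hq ha.le hb.le hab
  have hne : (centredInter K x).Nonempty := nonempty_of_measure_ne_zero (hx'.trans_ne hδ.ne')
  obtain ⟨p, hp, hmax⟩ := (isCompact_centredInter hK x).exists_isMaxOn hne
    (f := fun p => inner ℝ (y - x) p) (by fun_prop)
  have h := hmax (hzx (add_smul_mem_centredInter hKc ha hb hab hp (hxy' hp)))
  have hpos : 0 < inner ℝ (y - x) (y - x) := real_inner_self_pos.2 (sub_ne_zero.2 hxy.symm)
  simp only [mem_ofPred_eq, inner_add_right, inner_smul_right] at h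
  have : 0 < a * b / 2 * inner ℝ (y - x) (y - x) := by positivity
  linarith

theorem isOpen_setOf_lt_volume_centredInter (hKc : Convex ℝ K) (δ : ENNReal) :
    IsOpen {x | δ < volume (centredInter K x)} := by
  rw [Metric.isOpen_iff]
  intro x hx
  rw [mem_ofPred_eq, ← volume_interior_eq (convex_centredInter hKc x)] at hx
  obtain ⟨L, hLs, hL, hδL⟩ := isOpen_interior.exists_lt_isCompact hx
  obtain ⟨ε, hε, hthick⟩ := hL.exists_thickening_subset_open isOpen_interior hLs
  refine ⟨ε, hε, fun y hy => hδL.trans_le (measure_mono fun v hv => ?_)⟩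
  have hmem : ∀ u, ‖u‖ < ε → v + u ∈ centredInter K x := fun u hu =>
    interior_subset (hthick (Metric.mem_thickening_iff.2 ⟨v, hv, by simpa using hu⟩))
  have hyx : ‖(1 / 2 : ℝ) • (y - x)‖ < ε := by
    rw [Metric.mem_ball, dist_eq_norm] at hy
    rw [norm_smul]
    norm_num
    linarith [norm_nonneg (y - x)]
  refine ⟨?_, ?_⟩
  · convert (hmem _ hyx).1 using 1
    module
  · convert (hmem (-((1 / 2 : ℝ) • (y - x))) (by rwa [norm_neg])).2 using 1
    module

end ConvolutionBody

/-- The convolution body `K(δ) = {x : vol (K ∩ (x + K)) ≥ δ}` of a symmetric convex body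
is strictly convex. -/
theorem stmt_3 (n : ℕ) (K : Set (EuclideanSpace ℝ (Fin n)))
    (hKcomp : IsCompact K) (hKconv : Convex ℝ K) (hKint : (interior K).Nonempty)
    (hKsymm : K = -K)
    (δ : ENNReal) (hδ0 : 0 < δ) (hδ : δ < volume K) :
    StrictConvex ℝ {x : EuclideanSpace ℝ (Fin n) |
      δ ≤ volume (K ∩ (fun z => x + z) '' K)} := by
  simp only [← volume_centredInter]
  intro x hx y hy hxy a b ha hb hab
  have hsub : {u | δ < volume (centredInter K u)} ⊆ {u | δ ≤ volume (centredInter K u)} :=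
    fun u (hu : δ < volume (centredInter K u)) =>
      show δ ≤ volume (centredInter K u) from hu.le
  exact interior_maximal hsub (isOpen_setOf_lt_volume_centredInter hKconv δ)
    (lt_volume_centredInter hKcomp hKconv hKsymm hδ0 hxy hx hy ha hb hab)
end

section
/- Let K be a symmetric convex body in ℝⁿ such that for some τ > 0 the function x ↦ vol(K ∩ (x + τK)) depends only on ‖x‖_K. Then K is strictly convex. -/
open MeasureTheory Set
open scoped Pointwise

section Helpers

variable {E : Type*} [NormedAddCommGroup E] [NormedSpace ℝ E]

theorem zero_mem_interior_of_symm {K : Set E} (hconv : Convex ℝ K)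
    (hne : (interior K).Nonempty) (hsymm : K = -K) : (0 : E) ∈ interior K := by
  obtain ⟨x, hx⟩ := hne
  have hx' : -x ∈ interior K := by
    have h : interior K = -interior K := by
      conv_lhs => rw [hsymm]
      exact ((Homeomorph.neg E).preimage_interior K).symm
    rw [h]
    simpa using hx
  have := hconv.interior hx hx' (a := 1 / 2) (b := 1 / 2) (by norm_num) (by norm_num)
    (by norm_num)
  simpa using this

/-- A compact convex set with interior that is not strictly convex has a proper face: points
`a ≠ b` of `K` whose segment avoids the interior, with `a` extreme in `K`. -/
theorem exists_extreme_segment_of_not_strictConvex {K : Set E} (hcomp : IsCompact K)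
    (hconv : Convex ℝ K) (hne : (interior K).Nonempty) (hK : ¬ StrictConvex ℝ K) :
    ∃ a ∈ K.extremePoints ℝ, ∃ b ∈ K, a ≠ b ∧ ∀ z ∈ segment ℝ a b, z ∈ frontier K := by
  simp only [StrictConvex, Set.Pairwise] at hK
  push Not at hK
  obtain ⟨x, hx, y, hy, hxy, s, t, hs, ht, hst, hp⟩ := hK
  obtain ⟨f, hf⟩ := geometric_hahn_banach_open_point hconv.interior isOpen_interior hp
  set p := s • x + t • y
  have hfK : ∀ z ∈ K, f z ≤ f p := by
    intro z hz
    have hz' : z ∈ closure (interior K) := by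
      rw [hconv.closure_interior_eq_closure_of_nonempty_interior hne]
      exact subset_closure hz
    exact closure_minimal (fun w hw => (hf w hw).le)
      (isClosed_le f.continuous continuous_const) hz'
  have hface : ∀ u ∈ K, ∀ v ∈ K, ∀ α β : ℝ, 0 < α → 0 < β → α + β = 1 →
      f (α • u + β • v) = f p → f u = f p ∧ f v = f p := by
    intro u hu v hv α β hα hβ hαβ h
    have h1 := hfK u hu
    have h2 := hfK v hv
    have hβ' : β = 1 - α := by linarith
    simp only [map_add, map_smul, smul_eq_mul] at h
    subst hβ'
    constructor
    · nlinarith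
    · nlinarith
  obtain ⟨hfx, hfy⟩ := hface x hx y hy s t hs ht hst rfl
  set F : Set E := K ∩ {z | f z = f p}
  have hFcomp : IsCompact F :=
    hcomp.inter_right (isClosed_eq f.continuous continuous_const)
  obtain ⟨a, ha⟩ := hFcomp.extremePoints_nonempty ⟨x, hx, hfx⟩
  have haF : a ∈ F := ha.1
  obtain ⟨b, hbF, hab⟩ : ∃ b ∈ F, a ≠ b := by
    by_cases h : a = x
    · exact ⟨y, ⟨hy, hfy⟩, h ▸ hxy⟩
    · exact ⟨x, ⟨hx, hfx⟩, h⟩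
  refine ⟨a, ?_, b, hbF.1, hab, ?_⟩
  · refine ⟨haF.1, fun u hu v hv huv => ?_⟩
    have huv' := huv
    obtain ⟨α, β, hα, hβ, hαβ, h⟩ := huv
    obtain ⟨h1, h2⟩ := hface u hu v hv α β hα hβ hαβ (by rw [h]; exact haF.2)
    exact ha.2 ⟨hu, h1⟩ ⟨hv, h2⟩ huv'
  · rintro z ⟨α, β, hα, hβ, hαβ, rfl⟩
    refine ⟨subset_closure (hconv haF.1 hbF.1 hα hβ hαβ), fun hz => ?_⟩
    have h1 : f a = f p := haF.2
    have h2 : f b = f p := hbF.2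
    have h := hf _ hz
    simp only [map_add, map_smul, smul_eq_mul, h1, h2] at h
    rw [← add_mul, hαβ, one_mul] at h
    exact lt_irrefl _ h

/-- Near an extreme point `a`, the sets `K ∩ (r a + τ K)` shrink to `a` as `r → 1 + τ`. -/
theorem eventually_inter_subset_ball {K : Set E} (hcomp : IsCompact K) (hsymm : K = -K)
    {τ : ℝ} (hτ : 0 < τ) {a : E} (ha : a ∈ K.extremePoints ℝ) {δ : ℝ} (hδ : 0 < δ) :
    ∀ᶠ r in nhds (1 + τ), K ∩ (fun z => r • a + τ • z) '' K ⊆ Metric.ball a δ := by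
  set S : Set E := (fun q : E × E => q.1 - τ • q.2) '' ((K \ Metric.ball a δ) ×ˢ K)
  have hScomp : IsCompact S :=
    ((hcomp.diff Metric.isOpen_ball).prod hcomp).image (by fun_prop)
  have hnot : (1 + τ) • a ∉ S := by
    rintro ⟨⟨z, w⟩, ⟨⟨hz, hza⟩, hw⟩, h⟩
    have hw' : -w ∈ K := by rw [hsymm]; simpa using hw
    have hseg : a ∈ openSegment ℝ z (-w) := by
      refine ⟨1 / (1 + τ), τ / (1 + τ), by positivity, by positivity, by field_simp, ?_⟩
      have : a = (1 / (1 + τ)) • (z - τ • w) := by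
        simp only at h
        rw [h, smul_smul, one_div_mul_cancel (by positivity), one_smul]
      conv_rhs => rw [this]
      module
    have : z = a := ha.2 hz hw' hseg
    exact hza (this ▸ Metric.mem_ball_self hδ)
  have hcont : Continuous fun r : ℝ => r • a := by fun_prop
  filter_upwards [hcont.continuousAt.preimage_mem_nhds
    (hScomp.isClosed.isOpen_compl.mem_nhds hnot)] with r hr
  rintro z ⟨hz, w, hw, rfl⟩
  by_contra hball
  exact hr ⟨(r • a + τ • w, w), ⟨⟨hz, hball⟩, hw⟩, by simp⟩

/-- The homothetic intersections at two centres average into the one at the midpoint. -/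
theorem midpoint_mem_inter_homothety {K : Set E} (hconv : Convex ℝ K) {τ : ℝ} {x y u v : E}
    (hu : u ∈ K ∩ (fun z => x + τ • z) '' K) (hv : v ∈ K ∩ (fun z => y + τ • z) '' K) :
    (1 / 2 : ℝ) • (u + v) ∈ K ∩ (fun z => (1 / 2 : ℝ) • (x + y) + τ • z) '' K := by
  obtain ⟨huK, w, hw, rfl⟩ := hu
  obtain ⟨hvK, w', hw', rfl⟩ := hv
  have h : (0 : ℝ) ≤ 1 / 2 := by norm_num
  have h' : (1 / 2 : ℝ) + 1 / 2 = 1 := by norm_num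
  refine ⟨?_, _, hconv hw hw' h h h', ?_⟩
  · rw [smul_add]
    exact hconv huK hvK h h h'
  · dsimp only
    module

/-- A set of positive finite measure inside a small ball, averaged with more than `2 ^ dim` points
that are far apart, fills a set of strictly larger measure. -/
theorem measure_lt_of_average_subset [FiniteDimensional ℝ E] [MeasurableSpace E] [BorelSpace E]
    (μ : Measure E) [μ.IsAddHaarMeasure] {A M : Set E} (hA : MeasurableSet A)
    (hpos : μ A ≠ 0) (hfin : μ A ≠ ⊤) {a : E} {δ : ℝ} (hball : A ⊆ Metric.ball a δ)
    {N : ℕ} (hN : 2 ^ Module.finrank ℝ E < N) (p : Fin N → E)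
    (hp : ∀ i j, i ≠ j → 2 * δ ≤ dist (p i) (p j))
    (hM : ∀ u ∈ A, ∀ i, (1 / 2 : ℝ) • (u + p i) ∈ M) : μ A < μ M := by
  set T : Fin N → Set E := fun i => (1 / 2 : ℝ) • ((fun u => u + p i) '' A) with hT
  have hTmeas : ∀ i, MeasurableSet (T i) := fun i =>
    ((MeasurableEquiv.addRight (p i)).measurableSet_image.2 hA).const_smul₀ _
  have hTvol : ∀ i, μ (T i) = ENNReal.ofReal ((1 / 2) ^ Module.finrank ℝ E) * μ A := by
    intro i
    rw [hT]
    simp only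
    rw [Measure.addHaar_smul, abs_of_pos (by positivity)]
    simp
  have hdisj : Pairwise (Function.onFun Disjoint T) := by
    intro i j hij
    rw [Function.onFun, Set.disjoint_left]
    rintro _ ⟨_, ⟨u, hu, rfl⟩, rfl⟩ ⟨_, ⟨v, hv, rfl⟩, h⟩
    have h' : v + p j = u + p i := smul_right_injective E (by norm_num : (1 / 2 : ℝ) ≠ 0) h
    have h1 : dist u a < δ := hball hu
    have h2 : dist v a < δ := hball hv
    have h3 := hp i j hij
    have h4 : dist (p i) (p j) = dist u v := by
      rw [dist_eq_norm, dist_comm, dist_eq_norm]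
      congr 1
      rw [sub_eq_sub_iff_add_eq_add, add_comm (p i), ← h', add_comm]
    have h5 := dist_triangle_right u v a
    linarith
  have hsub : ⋃ i, T i ⊆ M := by
    refine iUnion_subset fun i => ?_
    rintro _ ⟨_, ⟨u, hu, rfl⟩, rfl⟩
    exact hM u hu i
  calc μ A = 1 * μ A := (one_mul _).symm
    _ < (N * ENNReal.ofReal ((1 / 2) ^ Module.finrank ℝ E)) * μ A := by
      refine (ENNReal.mul_lt_mul_iff_left hpos hfin).2 ?_
      rw [← ENNReal.ofReal_natCast, ← ENNReal.ofReal_mul (by positivity), ENNReal.one_lt_ofReal]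
      have : (2 : ℝ) ^ Module.finrank ℝ E < N := by exact_mod_cast hN
      rw [one_div, inv_pow, ← div_eq_mul_inv, one_lt_div (by positivity)]
      exact this
    _ = μ (⋃ i, T i) := by
      rw [measure_iUnion hdisj hTmeas, tsum_fintype]
      simp [hTvol, mul_assoc]
    _ ≤ μ M := measure_mono hsub

theorem measure_inter_homothety_ne_zero [MeasurableSpace E] (μ : Measure E) [μ.IsOpenPosMeasure]
    {K : Set E} (hconv : Convex ℝ K) (h0 : (0 : E) ∈ interior K) (hsymm : K = -K)
    {τ : ℝ} (hτ : 0 < τ) {a : E} (ha : a ∈ K) {r : ℝ} (hr0 : 0 ≤ r) (hr : r < 1 + τ) :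
    μ (K ∩ (fun z => r • a + τ • z) '' K) ≠ 0 := by
  have hρ : r / (1 + τ) < 1 := (div_lt_one (by positivity)).2 hr
  have hρ0 : 0 ≤ r / (1 + τ) := by positivity
  have hin : ∀ w ∈ K, (r / (1 + τ)) • w ∈ interior K := by
    intro w hw
    have := hconv.combo_interior_self_mem_interior h0 hw
      (sub_pos.2 hρ) hρ0 (by ring : 1 - r / (1 + τ) + r / (1 + τ) = 1)
    simpa using this
  have hna : -a ∈ K := by rw [hsymm]; simpa using ha
  have hopen : IsOpen (interior K ∩ (fun z => τ⁻¹ • (z - r • a)) ⁻¹' interior K) :=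
    isOpen_interior.inter (isOpen_interior.preimage (by fun_prop))
  refine fun h => (hopen.measure_pos μ ⟨(r / (1 + τ)) • a, hin a ha, ?_⟩).ne'
    (measure_mono_null ?_ h)
  · have h := hin (-a) hna
    rw [mem_preimage]
    convert h using 1
    rw [← sub_smul, smul_smul, smul_neg, ← neg_smul]
    congr 1
    field_simp
    ring
  · rintro z ⟨hz, hz'⟩
    refine ⟨interior_subset hz, _, interior_subset hz', ?_⟩
    dsimp only
    rw [smul_inv_smul₀ hτ.ne']
    abel

/-- Around the midpoint of a segment `[a, b] ⊆ K`, the intersection contains a segment parallel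
to `b - a` of length bounded below. -/
theorem segment_mem_inter_homothety {K : Set E} (hconv : Convex ℝ K) (hsymm : K = -K)
    (h0 : (0 : E) ∈ K) {τ : ℝ} (hτ : 0 < τ) {a b : E} (ha : a ∈ K) (hb : b ∈ K) {r : ℝ}
    (hr : (1 + τ) / 2 ≤ r) (hr' : r ≤ 1 + τ) {s : ℝ} (hs0 : 0 ≤ s) (hs1 : s ≤ 1 / 4)
    (hsτ : s ≤ τ / 4) :
    (r / (1 + τ)) • (1 / 2 : ℝ) • (a + b) + s • (b - a) ∈
      K ∩ (fun z => r • (1 / 2 : ℝ) • (a + b) + τ • z) '' K := by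
  set ρ := r / (1 + τ) with hρ
  have hρ1 : ρ ≤ 1 := (div_le_one (by positivity)).2 hr'
  have hρ2 : 1 / 2 ≤ ρ := by
    rw [hρ, le_div_iff₀ (by positivity)]
    linarith
  have key : ∀ s : ℝ, |s| ≤ 1 / 4 → ρ • (1 / 2 : ℝ) • (a + b) + s • (b - a) ∈ K := by
    intro s hs
    obtain ⟨h1, h2⟩ := abs_le.1 hs
    have hseg : (1 / 2 - s / ρ) • a + (1 / 2 + s / ρ) • b ∈ K := by
      have h3 : s / ρ ≤ 1 / 2 := by rw [div_le_iff₀ (by linarith)]; linarith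
      have h4 : -(1 / 2) ≤ s / ρ := by rw [le_div_iff₀ (by linarith)]; linarith
      exact hconv ha hb (by linarith) (by linarith) (by ring)
    have := hconv h0 hseg (sub_nonneg.2 hρ1) (by linarith : 0 ≤ ρ) (by ring)
    convert this using 1
    have hs' : s = ρ * (s / ρ) := by field_simp
    conv_lhs => rw [hs']
    module
  refine ⟨key s (by rwa [abs_of_nonneg hs0]),
    -(ρ • (1 / 2 : ℝ) • (a + b) + (-(s / τ)) • (b - a)), ?_, ?_⟩
  · rw [hsymm, Set.neg_mem_neg]
    refine key _ ?_
    rw [abs_neg, abs_of_nonneg (by positivity), div_le_iff₀ hτ]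
    linarith
  · have h1 : r = ρ * (1 + τ) := by rw [hρ]; field_simp
    have h2 : s = τ * (s / τ) := by field_simp
    dsimp only
    rw [h1]
    conv_rhs => rw [h2]
    module

end Helpers

/-- If for some `τ > 0` the volume `vol (K ∩ (x + τK))` depends only on `‖x‖_K`, then the
symmetric convex body `K` is strictly convex. -/
theorem stmt_4 (n : ℕ) (K : Set (EuclideanSpace ℝ (Fin n)))
    (hKcomp : IsCompact K) (hKconv : Convex ℝ K) (hKint : (interior K).Nonempty)
    (hKsymm : K = -K)
    (τ : ℝ) (hτ : 0 < τ)
    (hF : ∀ x y : EuclideanSpace ℝ (Fin n), gauge K x = gauge K y →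
      volume (K ∩ (fun z => x + τ • z) '' K) = volume (K ∩ (fun z => y + τ • z) '' K)) :
    StrictConvex ℝ K := by
  by_contra hK
  have h0 := zero_mem_interior_of_symm hKconv hKint hKsymm
  obtain ⟨a, ha, b, hb, hab, hfr⟩ :=
    exists_extreme_segment_of_not_strictConvex hKcomp hKconv hKint hK
  have haK : a ∈ K := ha.1
  set N : ℕ := 2 ^ Module.finrank ℝ (EuclideanSpace ℝ (Fin n)) + 1 with hN
  have hNpos : (0 : ℝ) < N := by positivity
  set σ : ℝ := min 1 τ / 4 with hσ
  have hσ0 : 0 < σ := by positivity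
  have hσ1 : σ ≤ 1 / 4 := by rw [hσ]; linarith [min_le_left 1 τ]
  have hστ : σ ≤ τ / 4 := by rw [hσ]; linarith [min_le_right 1 τ]
  have hd : 0 < ‖b - a‖ := norm_pos_iff.2 (sub_ne_zero.2 hab.symm)
  set δ : ℝ := σ / N * ‖b - a‖ / 2 with hδ
  have hδ0 : 0 < δ := by positivity
  obtain ⟨r, hball, hr, hr'⟩ : ∃ r, K ∩ (fun z => r • a + τ • z) '' K ⊆ Metric.ball a δ ∧
      (1 + τ) / 2 ≤ r ∧ r < 1 + τ := by
    have h1 := (eventually_inter_subset_ball hKcomp hKsymm hτ ha hδ0).filter_mono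
      (nhdsWithin_le_nhds (s := Iio (1 + τ)))
    have h2 : ∀ᶠ r in nhdsWithin (1 + τ) (Iio (1 + τ)), r ∈ Ioo ((1 + τ) / 2) (1 + τ) :=
      Ioo_mem_nhdsLT (by linarith)
    obtain ⟨r, hr1, hr2⟩ := (h1.and h2).exists
    exact ⟨r, hr1, hr2.1.le, hr2.2⟩
  have hr0 : 0 ≤ r := le_trans (by positivity) hr
  set A := K ∩ (fun z => r • a + τ • z) '' K with hA
  have hAcomp : IsCompact A :=
    hKcomp.inter (hKcomp.image (by fun_prop))
  have hgauge : ∀ z ∈ segment ℝ a b, gauge K (r • z) = r := by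
    intro z hz
    rw [gauge_smul_of_nonneg hr0, (gauge_eq_one_iff_mem_frontier hKconv
      (mem_interior_iff_mem_nhds.1 h0)).2 (hfr z hz), smul_eq_mul, mul_one]
  set c : EuclideanSpace ℝ (Fin n) := (1 / 2 : ℝ) • (a + b) with hc
  have hmid : (1 / 2 : ℝ) • (r • a + r • c) = r • ((3 / 4 : ℝ) • a + (1 / 4 : ℝ) • b) := by
    rw [hc]
    module
  have hvol := hF (r • a) ((1 / 2 : ℝ) • (r • a + r • c)) (by
    rw [hmid, hgauge a (left_mem_segment ℝ a b), hgauge]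
    exact ⟨3 / 4, 1 / 4, by norm_num, by norm_num, by norm_num, rfl⟩)
  refine (measure_lt_of_average_subset volume hAcomp.measurableSet
    (measure_inter_homothety_ne_zero volume hKconv h0 hKsymm hτ haK hr0 hr')
    hAcomp.measure_lt_top.ne hball (N := N) (Nat.lt_succ_self _)
    (fun i => (r / (1 + τ)) • c + ((i : ℕ) * (σ / N) : ℝ) • (b - a)) ?_ ?_).ne hvol
  · intro i j hij
    rw [dist_add_left, dist_eq_norm, ← sub_smul, ← sub_mul, norm_smul, norm_mul,
      Real.norm_of_nonneg (by positivity : 0 ≤ σ / N), Real.norm_eq_abs]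
    have h1 : (1 : ℝ) ≤ |((i : ℕ) : ℝ) - (j : ℕ)| := by
      have : ((i : ℕ) : ℤ) - (j : ℕ) ≠ 0 := by
        intro h
        exact hij (Fin.ext (by omega))
      exact_mod_cast Int.one_le_abs this
    have h2 : 0 < σ / N * ‖b - a‖ := by positivity
    rw [hδ, mul_assoc]
    nlinarith
  · intro u hu i
    have hi : ((i : ℕ) * (σ / N) : ℝ) ≤ σ := by
      have : ((i : ℕ) : ℝ) ≤ N := by exact_mod_cast i.2.le
      calc ((i : ℕ) * (σ / N) : ℝ) ≤ N * (σ / N) := by gcongr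
        _ = σ := by field_simp
    exact midpoint_mem_inter_homothety hKconv hu
      (segment_mem_inter_homothety hKconv hKsymm (interior_subset h0) hτ haK hb hr hr'.le
        (by positivity) (hi.trans hσ1) (hi.trans hστ))
end
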